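/- Assume g : ℝⁿ → ℝ is continuous and there are constants S > 0 and c ∈ ℝ such that g(x) = c whenever |x| ≥ S. Then there exists a weak solution u of the level-set flow equation u_t = F(γ_{Du} D²u γ_{Du}) on ℝⁿ × [0, ∞) with initial data u(x, 0) = g(x) for all x ∈ ℝⁿ, and there exist constants R > 0 and c' ∈ ℝ such that u(x, t) = c' whenever |x| + t ≥ R. -/

import Mathlib

noncomputable section
open scoped Classical
open Matrix Set Filter

variable {n : ℕ}

/-- Squared Euclidean norm of a vector in `ℝⁿ`. -/
def sqNorm (p : Fin n → ℝ) : ℝ := ∑ i, p i ^ 2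

/-- Euclidean norm of a vector in `ℝⁿ`. -/
def eucNorm (p : Fin n → ℝ) : ℝ := Real.sqrt (sqNorm p)

/-- `γ_p = I − p pᵀ/|p|²` for `p ≠ 0`. -/
def gammaP (p : Fin n → ℝ) : Matrix (Fin n) (Fin n) ℝ :=
  1 - (sqNorm p)⁻¹ • Matrix.vecMulVec p p

/-- `γ_η = I − η ηᵀ`. -/
def gammaE (η : Fin n → ℝ) : Matrix (Fin n) (Fin n) ℝ :=
  1 - Matrix.vecMulVec η η

/-- `γ M γ`, i.e. the matrix with entries `γ^{ik} M_{kl} γ^{lj}`. -/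
def conjM (g M : Matrix (Fin n) (Fin n) ℝ) : Matrix (Fin n) (Fin n) ℝ := g * M * g

/-- `F(A) = f(κ(A))` where `κ(A)` is the eigenvalue vector of the symmetric matrix `A`
(junk value `0` if `A` is not symmetric). -/
def Fof (f : (Fin n → ℝ) → ℝ) (A : Matrix (Fin n) (Fin n) ℝ) : ℝ :=
  if h : A.IsHermitian then f h.eigenvalues else 0

/-- The eigenvalue vector of `A` lies in `K`. -/
def eigIn (K : Set (Fin n → ℝ)) (A : Matrix (Fin n) (Fin n) ℝ) : Prop :=
  ∃ h : A.IsHermitian, h.eigenvalues ∈ K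

/-- Gradient of a function on `ℝⁿ`. -/
def gradv (ψ : (Fin n → ℝ) → ℝ) (x : Fin n → ℝ) : Fin n → ℝ := fun i =>
  fderiv ℝ ψ x (Pi.single i 1)

/-- Hessian matrix of a function on `ℝⁿ`. -/
def hessv (ψ : (Fin n → ℝ) → ℝ) (x : Fin n → ℝ) : Matrix (Fin n) (Fin n) ℝ :=
  Matrix.of fun i j => fderiv ℝ (fun y => fderiv ℝ ψ y (Pi.single j 1)) x (Pi.single i 1)

/-- `K ⊂ ℝⁿ` is an open symmetric convex cone whose closure strictly contains the closed
positive cone. -/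
def GoodCone (K : Set (Fin n → ℝ)) : Prop :=
  IsOpen K ∧ Convex ℝ K ∧ (∀ c : ℝ, 0 < c → ∀ κ ∈ K, c • κ ∈ K) ∧
  (∀ σ : Equiv.Perm (Fin n), ∀ κ ∈ K, (κ ∘ σ) ∈ K) ∧
  {κ : Fin n → ℝ | ∀ i, 0 ≤ κ i} ⊆ closure K ∧
  {κ : Fin n → ℝ | ∀ i, 0 ≤ κ i} ≠ closure K

/-- The structure conditions on the curvature function `f` : smooth and symmetric on `K`,
strictly increasing in each variable, concave, positive in `K`, vanishing on `∂K`,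
normalized, and positively homogeneous of degree one. -/
def GoodF (K : Set (Fin n → ℝ)) (f : (Fin n → ℝ) → ℝ) : Prop :=
  ContDiffOn ℝ (⊤ : ℕ∞) f K ∧
  (∀ σ : Equiv.Perm (Fin n), ∀ κ, f (κ ∘ σ) = f κ) ∧
  (∀ κ ∈ K, ∀ i, 0 < fderiv ℝ f κ (Pi.single i 1)) ∧
  ConcaveOn ℝ K f ∧
  (∀ κ ∈ K, 0 < f κ) ∧
  (∀ κ ∈ frontier K, f κ = 0) ∧
  f (fun _ => 1) = 1 ∧
  (∀ c : ℝ, 0 < c → ∀ κ ∈ K, f (c • κ) = c * f κ)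

/-- Spatial gradient `Dφ` of a function of `(x, t)`. -/
def spaceGrad (φ : (Fin n → ℝ) × ℝ → ℝ) (z : (Fin n → ℝ) × ℝ) : Fin n → ℝ :=
  gradv (fun x => φ (x, z.2)) z.1

/-- Spatial Hessian `D²φ` of a function of `(x, t)`. -/
def spaceHess (φ : (Fin n → ℝ) × ℝ → ℝ) (z : (Fin n → ℝ) × ℝ) : Matrix (Fin n) (Fin n) ℝ :=
  hessv (fun x => φ (x, z.2)) z.1

/-- Time derivative `φ_t` of a function of `(x, t)`. -/
def timeDeriv (φ : (Fin n → ℝ) × ℝ → ℝ) (z : (Fin n → ℝ) × ℝ) : ℝ :=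
  deriv (fun t => φ (z.1, t)) z.2

/-- `ℝⁿ × [0, ∞)`. -/
def HalfSpace (n : ℕ) : Set ((Fin n → ℝ) × ℝ) := {z | 0 ≤ z.2}

/-- A smooth function `φ` is admissible on an open set `D ⊆ ℝⁿ × (0, ∞)`. -/
def Admissible (K : Set (Fin n → ℝ)) (f : (Fin n → ℝ) → ℝ)
    (φ : (Fin n → ℝ) × ℝ → ℝ) (D : Set ((Fin n → ℝ) × ℝ)) : Prop :=
  ContDiff ℝ (⊤ : ℕ∞) φ ∧
  ∀ z ∈ D,
    (spaceGrad φ z ≠ 0 →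
      eigIn K (conjM (gammaP (spaceGrad φ z)) (spaceHess φ z)) ∧
      0 < Fof f (conjM (gammaP (spaceGrad φ z)) (spaceHess φ z))) ∧
    (spaceGrad φ z = 0 →
      ∃ η : Fin n → ℝ, eucNorm η ≤ 1 ∧
        eigIn K (conjM (gammaE η) (spaceHess φ z)) ∧
        0 < Fof f (conjM (gammaE η) (spaceHess φ z)))

/-- Weak subsolution of `u_t = F(γ_{Du} D²u γ_{Du})` on `ℝⁿ × [0, ∞)`:
`u ∈ C(ℝⁿ × [0,∞)) ∩ L^∞(ℝⁿ × [0,∞))` and the viscosity (test-function) inequalities hold. -/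
def WeakSub (K : Set (Fin n → ℝ)) (f : (Fin n → ℝ) → ℝ)
    (u : (Fin n → ℝ) × ℝ → ℝ) : Prop :=
  ContinuousOn u (HalfSpace n) ∧ (∃ M : ℝ, ∀ z ∈ HalfSpace n, |u z| ≤ M) ∧
  ∀ D : Set ((Fin n → ℝ) × ℝ), IsOpen D → D ⊆ {z | 0 < z.2} →
    ∀ φ, Admissible K f φ D → ∀ z₀ ∈ D, IsLocalMax (fun z => u z - φ z) z₀ →
      (spaceGrad φ z₀ ≠ 0 →
        timeDeriv φ z₀ ≤ Fof f (conjM (gammaP (spaceGrad φ z₀)) (spaceHess φ z₀))) ∧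
      (spaceGrad φ z₀ = 0 →
        ∃ η : Fin n → ℝ, eucNorm η ≤ 1 ∧
          timeDeriv φ z₀ ≤ Fof f (conjM (gammaE η) (spaceHess φ z₀)))

/-- Weak supersolution of `u_t = F(γ_{Du} D²u γ_{Du})` on `ℝⁿ × [0, ∞)`. -/
def WeakSuper (K : Set (Fin n → ℝ)) (f : (Fin n → ℝ) → ℝ)
    (u : (Fin n → ℝ) × ℝ → ℝ) : Prop :=
  ContinuousOn u (HalfSpace n) ∧ (∃ M : ℝ, ∀ z ∈ HalfSpace n, |u z| ≤ M) ∧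
  ∀ D : Set ((Fin n → ℝ) × ℝ), IsOpen D → D ⊆ {z | 0 < z.2} →
    ∀ φ, Admissible K f φ D → ∀ z₀ ∈ D, IsLocalMin (fun z => u z - φ z) z₀ →
      (spaceGrad φ z₀ ≠ 0 →
        Fof f (conjM (gammaP (spaceGrad φ z₀)) (spaceHess φ z₀)) ≤ timeDeriv φ z₀) ∧
      (spaceGrad φ z₀ = 0 →
        ∃ η : Fin n → ℝ, eucNorm η ≤ 1 ∧
          Fof f (conjM (gammaE η) (spaceHess φ z₀)) ≤ timeDeriv φ z₀)

/-- Weak solution: both a weak subsolution and a weak supersolution. -/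
def WeakSol (K : Set (Fin n → ℝ)) (f : (Fin n → ℝ) → ℝ)
    (u : (Fin n → ℝ) × ℝ → ℝ) : Prop :=
  WeakSub K f u ∧ WeakSuper K f u

/-! ### Eigenvalues and quadratic forms -/

/-- Position of an index in the sorted list of eigenvalues. -/
def posi (i : Fin n) : Fin (Fintype.card (Fin n)) :=
  (Fintype.equivOfCardEq (Fintype.card_fin (Fintype.card (Fin n)))).symm i

lemma posi_inj : Function.Injective (posi : Fin n → _) := fun a b h => by
  simpa [posi] using h

lemma eig_anti {A : Matrix (Fin n) (Fin n) ℝ} (hA : A.IsHermitian) {i j : Fin n}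
    (h : posi i ≤ posi j) : hA.eigenvalues j ≤ hA.eigenvalues i :=
  hA.eigenvalues₀_antitone h

/-- Coordinates in the eigenbasis. -/
def coo {A : Matrix (Fin n) (Fin n) ℝ} (hA : A.IsHermitian) : (Fin n → ℝ) →ₗ[ℝ] (Fin n → ℝ) :=
  Matrix.mulVecLin (star (hA.eigenvectorUnitary : Matrix (Fin n) (Fin n) ℝ))

lemma dot_coo {A : Matrix (Fin n) (Fin n) ℝ} (hA : A.IsHermitian) (x : Fin n → ℝ) :
    x ⬝ᵥ x = ∑ j, (coo hA x j) ^ 2 := by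
  have h1 : ∑ j, (coo hA x j) ^ 2 = coo hA x ⬝ᵥ coo hA x := by
    simp [dotProduct, pow_two]
  rw [h1]
  simp only [coo, mulVecLin_apply]
  have hU : (hA.eigenvectorUnitary : Matrix (Fin n) (Fin n) ℝ) *
      star (hA.eigenvectorUnitary : Matrix (Fin n) (Fin n) ℝ) = 1 :=
    Unitary.coe_mul_star_self _
  set U := (hA.eigenvectorUnitary : Matrix (Fin n) (Fin n) ℝ)
  have : (star U *ᵥ x) = x ᵥ* U := by
    rw [star_eq_conjTranspose, conjTranspose_eq_transpose_of_trivial, mulVec_transpose]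
  conv_rhs => lhs; rw [this]
  rw [← dotProduct_mulVec, mulVec_mulVec, hU, one_mulVec]

lemma quad_coo {A : Matrix (Fin n) (Fin n) ℝ} (hA : A.IsHermitian) (x : Fin n → ℝ) :
    x ⬝ᵥ A *ᵥ x = ∑ j, hA.eigenvalues j * (coo hA x j) ^ 2 := by
  have hs := hA.spectral_theorem
  rw [Unitary.conjStarAlgAut_apply] at hs
  have h1 : ∑ j, hA.eigenvalues j * (coo hA x j) ^ 2 =
      coo hA x ⬝ᵥ (diagonal hA.eigenvalues *ᵥ coo hA x) := by
    simp only [dotProduct, mulVec_diagonal]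
    exact Finset.sum_congr rfl fun j _ => by ring
  rw [h1]
  simp only [coo, mulVecLin_apply]
  set U := (hA.eigenvectorUnitary : Matrix (Fin n) (Fin n) ℝ)
  have : (star U *ᵥ x) = x ᵥ* U := by
    rw [star_eq_conjTranspose, conjTranspose_eq_transpose_of_trivial, mulVec_transpose]
  conv_rhs => lhs; rw [this]
  rw [← dotProduct_mulVec, mulVec_mulVec, mulVec_mulVec]
  exact congrArg (fun N : Matrix (Fin n) (Fin n) ℝ => x ⬝ᵥ N *ᵥ x) hs

/-- Courant–Fischer, lower bound. -/
lemma le_eig_of_subspace {B : Matrix (Fin n) (Fin n) ℝ} (hB : B.IsHermitian) (i : Fin n)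
    (V : Submodule ℝ (Fin n → ℝ)) (c : ℝ)
    (hV : Fintype.card {j : Fin n // posi j < posi i} < Module.finrank ℝ V)
    (h : ∀ y ∈ V, c * (y ⬝ᵥ y) ≤ y ⬝ᵥ B *ᵥ y) : c ≤ hB.eigenvalues i := by
  let L : V →ₗ[ℝ] ({j : Fin n // posi j < posi i} → ℝ) :=
    (LinearMap.funLeft ℝ ℝ (Subtype.val : {j : Fin n // posi j < posi i} → Fin n)) ∘ₗ
      (coo hB) ∘ₗ V.subtype
  have hk : LinearMap.ker L ≠ ⊥ := by
    apply LinearMap.ker_ne_bot_of_finrank_lt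
    simpa using hV
  obtain ⟨y, hy, hy0⟩ := Submodule.exists_mem_ne_zero_of_ne_bot hk
  have hz : ∀ j, posi j < posi i → coo hB y j = 0 := fun j hj => by
    have := congrFun (LinearMap.mem_ker.1 hy) ⟨j, hj⟩
    simpa [L, LinearMap.funLeft] using this
  have hle : (y : Fin n → ℝ) ⬝ᵥ B *ᵥ y ≤ hB.eigenvalues i * ((y : Fin n → ℝ) ⬝ᵥ y) := by
    rw [quad_coo hB, dot_coo hB, Finset.mul_sum]
    refine Finset.sum_le_sum fun j _ => ?_
    by_cases hj : posi j < posi i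
    · simp [hz j hj]
    · exact mul_le_mul_of_nonneg_right (eig_anti hB (not_lt.1 hj)) (sq_nonneg _)
  have hpos : 0 < (y : Fin n → ℝ) ⬝ᵥ y := by
    have h0 : (y : Fin n → ℝ) ≠ 0 := by simpa using hy0
    have := dotProduct_star_self_pos_iff.2 h0
    simpa using this
  have := (h y y.2).trans hle
  exact le_of_mul_le_mul_right this hpos

/-- The span of the top eigenvectors. -/
lemma exists_top {A : Matrix (Fin n) (Fin n) ℝ} (hA : A.IsHermitian) (i : Fin n) :
    ∃ V : Submodule ℝ (Fin n → ℝ),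
      Fintype.card {j : Fin n // posi j < posi i} < Module.finrank ℝ V ∧
      ∀ y ∈ V, hA.eigenvalues i * (y ⬝ᵥ y) ≤ y ⬝ᵥ A *ᵥ y := by
  let L : (Fin n → ℝ) →ₗ[ℝ] ({j : Fin n // posi i < posi j} → ℝ) :=
    (LinearMap.funLeft ℝ ℝ (Subtype.val : {j : Fin n // posi i < posi j} → Fin n)) ∘ₗ (coo hA)
  refine ⟨LinearMap.ker L, ?_, ?_⟩
  · have h1 := LinearMap.finrank_range_add_finrank_ker L
    have h2 : Module.finrank ℝ (LinearMap.range L) ≤ Fintype.card {j : Fin n // posi i < posi j} := by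
      have := Submodule.finrank_le (LinearMap.range L)
      simpa using this
    have h3 : Fintype.card {j : Fin n // posi j < posi i} +
        Fintype.card {j : Fin n // posi i < posi j} + 1 ≤ n := by
      rw [Fintype.card_subtype, Fintype.card_subtype, ← Finset.card_union_of_disjoint]
      · have : (Finset.univ.filter (fun j : Fin n => posi j < posi i) ∪
            Finset.univ.filter (fun j : Fin n => posi i < posi j)).card < (Finset.univ : Finset (Fin n)).card := by
          apply Finset.card_lt_card
          rw [Finset.ssubset_univ_iff]
          intro h
          have := h ▸ Finset.mem_univ i
          simp at this
        simpa using this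
      · rw [Finset.disjoint_filter]
        intro j _ h1 h2
        exact lt_asymm h1 h2
    simp only [Module.finrank_fintype_fun_eq_card, Fintype.card_fin] at h1
    omega
  · intro y hy
    have hz : ∀ j, posi i < posi j → coo hA y j = 0 := fun j hj => by
      have := congrFun (LinearMap.mem_ker.1 hy) ⟨j, hj⟩
      simpa [L, LinearMap.funLeft] using this
    rw [quad_coo hA, dot_coo hA, Finset.mul_sum]
    refine Finset.sum_le_sum fun j _ => ?_
    by_cases hj : posi i < posi j
    · simp [hz j hj]
    · exact mul_le_mul_of_nonneg_right (eig_anti hA (not_lt.1 hj)) (sq_nonneg _)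

/-- Weyl monotonicity with a shift. -/
lemma eig_le {A B : Matrix (Fin n) (Fin n) ℝ} (hA : A.IsHermitian) (hB : B.IsHermitian) (ε : ℝ)
    (h : ∀ x : Fin n → ℝ, x ⬝ᵥ A *ᵥ x ≤ x ⬝ᵥ B *ᵥ x + ε * (x ⬝ᵥ x)) (i : Fin n) :
    hA.eigenvalues i ≤ hB.eigenvalues i + ε := by
  obtain ⟨V, hV, hV2⟩ := exists_top hA i
  have := le_eig_of_subspace hB i V (hA.eigenvalues i - ε) hV (fun y hy => by
    have := hV2 y hy
    have := h y
    linarith)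
  linarith

lemma dot_pos {x : Fin n → ℝ} (h : x ≠ 0) : 0 < x ⬝ᵥ x := by
  have := dotProduct_star_self_pos_iff.2 h
  simpa using this

lemma dot_nonneg (x : Fin n → ℝ) : 0 ≤ x ⬝ᵥ x := by
  have := dotProduct_star_self_nonneg x
  simpa using this

/-- every eigenvalue is a Rayleigh quotient -/
lemma exists_eigvec {A : Matrix (Fin n) (Fin n) ℝ} (hA : A.IsHermitian) (i : Fin n) :
    ∃ x : Fin n → ℝ, x ⬝ᵥ x = 1 ∧ A *ᵥ x = hA.eigenvalues i • x := by
  refine ⟨hA.eigenvectorBasis i, ?_, hA.mulVec_eigenvectorBasis i⟩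
  have h := hA.eigenvectorBasis.orthonormal.1 i
  have h2 := EuclideanSpace.real_norm_sq_eq (hA.eigenvectorBasis i)
  rw [h] at h2
  simp only [dotProduct, ← pow_two]
  linarith

/-! ### The cone and the curvature function -/

section cone
variable {K : Set (Fin n → ℝ)} {f : (Fin n → ℝ) → ℝ}

lemma GoodCone.nonempty (hK : GoodCone K) : K.Nonempty := by
  have : (0 : Fin n → ℝ) ∈ closure K := hK.2.2.2.2.1 (by simp)
  exact closure_nonempty_iff.1 ⟨_, this⟩

lemma GoodCone.add_closure (hK : GoodCone K) {a b : Fin n → ℝ} (ha : a ∈ K) (hb : b ∈ closure K) :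
    a + b ∈ K := by
  have h1 : (1/2 : ℝ) • a + (1/2 : ℝ) • b ∈ interior K := by
    apply hK.2.1.openSegment_interior_closure_subset_interior (by rwa [hK.1.interior_eq]) hb
    exact ⟨1/2, 1/2, by norm_num, by norm_num, by norm_num, rfl⟩
  rw [hK.1.interior_eq] at h1
  have := hK.2.2.1 2 (by norm_num) _ h1
  convert this using 1
  ext i; simp; ring

lemma GoodCone.add_nonneg (hK : GoodCone K) {a b : Fin n → ℝ} (ha : a ∈ K) (hb : ∀ i, 0 ≤ b i) :
    a + b ∈ K := hK.add_closure ha (hK.2.2.2.2.1 hb)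

lemma GoodCone.mono (hK : GoodCone K) {a b : Fin n → ℝ} (ha : a ∈ K) (hb : ∀ i, a i ≤ b i) :
    b ∈ K := by
  have := hK.add_nonneg ha (b := b - a) (fun i => by simpa using hb i)
  simpa using this

lemma GoodCone.interior_closure (hK : GoodCone K) : interior (closure K) = K := by
  rw [hK.2.1.interior_closure_eq_interior_of_nonempty_interior, hK.1.interior_eq]
  rw [hK.1.interior_eq]; exact hK.nonempty

lemma GoodCone.pos_mem (hK : GoodCone K) {a : Fin n → ℝ} (ha : ∀ i, 0 < a i) : a ∈ K := by
  rw [← hK.interior_closure, mem_interior]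
  refine ⟨{κ | ∀ i, 0 < κ i}, fun κ h => hK.2.2.2.2.1 fun i => (h i).le, ?_, ha⟩
  rw [show {κ : Fin n → ℝ | ∀ i, 0 < κ i} = ⋂ i, {κ | 0 < κ i} by ext; simp]
  exact isOpen_iInter_of_finite fun i => isOpen_lt continuous_const (continuous_apply i)

lemma GoodCone.zero_notMem (hK : GoodCone K) (hf : GoodF K f) : (0 : Fin n → ℝ) ∉ K := by
  intro h
  have h1 := hf.2.2.2.2.2.2.2 2 (by norm_num) 0 h
  have h2 := hf.2.2.2.2.1 0 h
  simp at h1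
  linarith

lemma GoodCone.nonpos_notMem (hK : GoodCone K) (hf : GoodF K f) {a : Fin n → ℝ}
    (ha : ∀ i, a i ≤ 0) : a ∉ K := fun h =>
  hK.zero_notMem hf (hK.mono h ha)

/-- `(1,…,1,0) ∈ K`. -/
lemma GoodCone.sub_single_mem (hK : GoodCone K) (i : Fin n) :
    ((fun _ => 1) - Pi.single i 1 : Fin n → ℝ) ∈ K := by
  -- an element with a negative coordinate
  have hss : ∃ v ∈ closure K, ∃ j, v j < 0 := by
    by_contra hcon
    push Not at hcon
    exact hK.2.2.2.2.2 (Subset.antisymm hK.2.2.2.2.1 fun v hv => hcon v hv)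
  obtain ⟨v, hv, j, hj⟩ := hss
  have hopen : IsOpen {w : Fin n → ℝ | w j < 0} := isOpen_lt (continuous_apply j) continuous_const
  obtain ⟨w, hwj, hwK⟩ := mem_closure_iff.1 hv _ hopen hj
  -- move the negative coordinate to `i`
  have hw' := hK.2.2.2.1 (Equiv.swap i j) w hwK
  set w' := w ∘ (Equiv.swap i j)
  have hw'i : w' i < 0 := by simpa [w'] using hwj
  -- dominate
  obtain ⟨M, hM⟩ : ∃ M : ℝ, 0 < M ∧ ∀ k, w' k ≤ M :=
    ⟨1 + ∑ k, |w' k|, by positivity, fun k => by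
      have := Finset.single_le_sum (f := fun k => |w' k|) (fun _ _ => abs_nonneg _) (Finset.mem_univ k)
      have := le_abs_self (w' k)
      linarith⟩
  have hd : (M • ((fun _ => 1) - Pi.single i 1 : Fin n → ℝ)) ∈ K := by
    refine hK.mono hw' fun k => ?_
    by_cases hk : k = i
    · subst hk; simpa using hw'i.le
    · simpa [Pi.single_apply, hk] using hM.2 k
  have := hK.2.2.1 M⁻¹ (inv_pos.2 hM.1) _ hd
  rwa [smul_smul, inv_mul_cancel₀ hM.1.ne', one_smul] at this

lemma f_superadd (hK : GoodCone K) (hf : GoodF K f) {a b : Fin n → ℝ} (ha : a ∈ K) (hb : b ∈ K) :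
    f a + f b ≤ f (a + b) := by
  have hcc : ConcaveOn ℝ K f := hf.2.2.2.1
  have h2p : (0:ℝ) ≤ 1/2 := by norm_num
  have h21 : (1/2:ℝ) + 1/2 = 1 := by norm_num
  have h := hcc.2 ha hb h2p h2p h21
  have hm := hcc.1 ha hb h2p h2p h21
  have h2 := hf.2.2.2.2.2.2.2 2 (by norm_num) _ hm
  have : (2:ℝ) • ((1/2 : ℝ) • a + (1/2 : ℝ) • b) = a + b := by ext i; simp; ring
  rw [this] at h2
  simp only [smul_eq_mul] at h
  linarith

lemma f_contAt (hK : GoodCone K) (hf : GoodF K f) {a : Fin n → ℝ} (ha : a ∈ K) :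
    ContinuousAt f a := hf.1.continuousOn.continuousAt (hK.1.mem_nhds ha)

lemma f_tendsto_add (hK : GoodCone K) (hf : GoodF K f) {a : Fin n → ℝ} (ha : a ∈ K) :
    Tendsto (fun ε : ℝ => f (fun i => a i + ε)) (nhds 0) (nhds (f a)) := by
  have hc : ContinuousAt (fun ε : ℝ => (fun i => a i + ε : Fin n → ℝ)) 0 := by
    apply Continuous.continuousAt; fun_prop
  have : ContinuousAt f ((fun ε : ℝ => (fun i => a i + ε : Fin n → ℝ)) 0) := by
    simpa using f_contAt hK hf ha
  have := ContinuousAt.comp (f := fun ε : ℝ => (fun i => a i + ε : Fin n → ℝ)) this hc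
  simpa [ContinuousAt, Function.comp_def] using this

lemma mem_tendsto_add (hK : GoodCone K) {a : Fin n → ℝ} (ha : a ∈ K) :
    ∀ᶠ ε : ℝ in nhds 0, (fun i => a i + ε) ∈ K := by
  have hc : ContinuousAt (fun ε : ℝ => (fun i => a i + ε : Fin n → ℝ)) 0 := by
    apply Continuous.continuousAt; fun_prop
  apply hc
  simpa using hK.1.mem_nhds ha

lemma f_mono (hK : GoodCone K) (hf : GoodF K f) {a b : Fin n → ℝ} (ha : a ∈ K)
    (hb : ∀ i, a i ≤ b i) : f a ≤ f b := by
  have hbK := hK.mono ha hb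
  have ht := (f_tendsto_add hK hf hbK).mono_left (nhdsWithin_le_nhds (s := Ioi (0:ℝ)))
  refine ge_of_tendsto ht ?_
  filter_upwards [self_mem_nhdsWithin] with ε (hε : 0 < ε)
  have hc : (fun i => b i - a i + ε) ∈ K := hK.pos_mem fun i => by have := hb i; linarith
  have := f_superadd hK hf ha hc
  have h0 := hf.2.2.2.2.1 _ hc
  have e : a + (fun i => b i - a i + ε) = fun i => b i + ε := by ext i; simp; ring
  rw [e] at this
  linarith

/-- Loewner order -/
def LE' (A B : Matrix (Fin n) (Fin n) ℝ) : Prop := ∀ x : Fin n → ℝ, x ⬝ᵥ A *ᵥ x ≤ x ⬝ᵥ B *ᵥ x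

lemma Fof_eq {A : Matrix (Fin n) (Fin n) ℝ} (hA : A.IsHermitian) : Fof f A = f hA.eigenvalues :=
  dif_pos hA

lemma eigIn_iff {A : Matrix (Fin n) (Fin n) ℝ} (hA : A.IsHermitian) :
    eigIn K A ↔ hA.eigenvalues ∈ K := ⟨fun ⟨_, h⟩ => h, fun h => ⟨hA, h⟩⟩

lemma eigIn.pos (hf : GoodF K f) {A : Matrix (Fin n) (Fin n) ℝ} (h : eigIn K A) : 0 < Fof f A := by
  obtain ⟨hA, h⟩ := h
  rw [Fof_eq hA]; exact hf.2.2.2.2.1 _ h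

lemma eigIn_mono (hK : GoodCone K) (hf : GoodF K f) {A B : Matrix (Fin n) (Fin n) ℝ}
    (hB : B.IsHermitian) (hAB : LE' A B) (h : eigIn K A) :
    eigIn K B ∧ Fof f A ≤ Fof f B := by
  obtain ⟨hA, h⟩ := h
  have hle : ∀ i, hA.eigenvalues i ≤ hB.eigenvalues i := fun i => by
    have := eig_le hA hB 0 (fun x => by simpa using hAB x) i
    simpa using this
  rw [Fof_eq hA, Fof_eq hB, eigIn_iff hB]
  exact ⟨hK.mono h hle, f_mono hK hf h hle⟩

lemma herm_add_smul {A : Matrix (Fin n) (Fin n) ℝ} (hA : A.IsHermitian) (ε : ℝ) :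
    (A + ε • (1 : Matrix (Fin n) (Fin n) ℝ)).IsHermitian := by
  apply hA.add
  simp [IsHermitian]

lemma quad_add_smul (A : Matrix (Fin n) (Fin n) ℝ) (ε : ℝ) (x : Fin n → ℝ) :
    x ⬝ᵥ (A + ε • (1 : Matrix (Fin n) (Fin n) ℝ)) *ᵥ x = x ⬝ᵥ A *ᵥ x + ε * (x ⬝ᵥ x) := by
  simp [add_mulVec, smul_mulVec, dotProduct_add]

lemma eig_add_smul {A : Matrix (Fin n) (Fin n) ℝ} (hA : A.IsHermitian) (ε : ℝ) :
    (herm_add_smul hA ε).eigenvalues = fun i => hA.eigenvalues i + ε := by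
  funext i
  apply le_antisymm
  · exact eig_le _ _ ε (fun x => by rw [quad_add_smul]) i
  · have := eig_le hA (herm_add_smul hA ε) (-ε) (fun x => by rw [quad_add_smul]; linarith) i
    linarith

lemma Fof_tendsto (hK : GoodCone K) (hf : GoodF K f) {A : Matrix (Fin n) (Fin n) ℝ}
    (h : eigIn K A) : Tendsto (fun ε : ℝ => Fof f (A + ε • (1 : Matrix (Fin n) (Fin n) ℝ)))
      (nhds 0) (nhds (Fof f A)) := by
  obtain ⟨hA, h⟩ := h
  simp_rw [Fof_eq (herm_add_smul hA _), Fof_eq hA, eig_add_smul hA]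
  exact f_tendsto_add hK hf h

lemma eigIn_eventually (hK : GoodCone K) {A : Matrix (Fin n) (Fin n) ℝ}
    (h : eigIn K A) : ∀ᶠ ε : ℝ in nhds 0, eigIn K (A + ε • (1 : Matrix (Fin n) (Fin n) ℝ)) := by
  obtain ⟨hA, h⟩ := h
  simp_rw [eigIn_iff (herm_add_smul hA _), eig_add_smul hA]
  exact mem_tendsto_add hK h

/-- if `τ ≤ F(A+ε)` for all `ε > 0` and `A ∈ K` then `τ ≤ F(A)`. -/
lemma le_Fof_of_forall (hK : GoodCone K) (hf : GoodF K f) {A : Matrix (Fin n) (Fin n) ℝ} {τ : ℝ}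
    (h : eigIn K A) (hτ : ∀ ε : ℝ, 0 < ε → τ ≤ Fof f (A + ε • (1 : Matrix (Fin n) (Fin n) ℝ))) :
    τ ≤ Fof f A := by
  have ht := (Fof_tendsto hK hf h).mono_left (nhdsWithin_le_nhds (s := Ioi (0:ℝ)))
  refine ge_of_tendsto ht ?_
  filter_upwards [self_mem_nhdsWithin] with ε hε using hτ ε hε

/-- a nonpositive form is never in `K`. -/
lemma not_eigIn_of_nonpos (hK : GoodCone K) (hf : GoodF K f) {A : Matrix (Fin n) (Fin n) ℝ}
    (h : ∀ x : Fin n → ℝ, x ⬝ᵥ A *ᵥ x ≤ 0) : ¬ eigIn K A := by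
  rintro ⟨hA, hAK⟩
  refine hK.nonpos_notMem hf (fun i => ?_) hAK
  obtain ⟨x, hx, hAx⟩ := exists_eigvec hA i
  have := h x
  rw [hAx, dotProduct_smul, hx] at this
  simpa using this

/-- if a form is bounded by `C|x|²` then `F ≤ C`. -/
lemma Fof_le (hK : GoodCone K) (hf : GoodF K f) {A : Matrix (Fin n) (Fin n) ℝ} {C : ℝ}
    (hC : 0 < C) (hAK : eigIn K A)
    (h : ∀ x : Fin n → ℝ, x ⬝ᵥ A *ᵥ x ≤ C * (x ⬝ᵥ x)) : Fof f A ≤ C := by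
  obtain ⟨hA, hAK⟩ := hAK
  rw [Fof_eq hA]
  have h1 : f (C • (fun _ => 1)) = C * f (fun _ => 1) :=
    hf.2.2.2.2.2.2.2 C hC _ (hK.pos_mem fun _ => one_pos)
  rw [hf.2.2.2.2.2.2.1, mul_one] at h1
  rw [← h1]
  refine f_mono hK hf hAK fun i => ?_
  obtain ⟨x, hx, hAx⟩ := exists_eigvec hA i
  have := h x
  rw [hAx, dotProduct_smul, hx] at this
  simpa using this

/-- if a form is bounded below by `C|x|²` then it is in `K` and `F ≥ C`. -/
lemma le_Fof (hK : GoodCone K) (hf : GoodF K f) {A : Matrix (Fin n) (Fin n) ℝ} {C : ℝ}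
    (hC : 0 < C) (hA : A.IsHermitian)
    (h : ∀ x : Fin n → ℝ, C * (x ⬝ᵥ x) ≤ x ⬝ᵥ A *ᵥ x) : eigIn K A ∧ C ≤ Fof f A := by
  have hle : ∀ i, C ≤ hA.eigenvalues i := fun i => by
    obtain ⟨x, hx, hAx⟩ := exists_eigvec hA i
    have := h x
    rw [hAx, dotProduct_smul, hx] at this
    simpa using this
  rw [Fof_eq hA, eigIn_iff hA]
  refine ⟨hK.pos_mem fun i => hC.trans_le (hle i), ?_⟩
  have h1 : f (C • (fun _ => 1)) = C * f (fun _ => 1) :=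
    hf.2.2.2.2.2.2.2 C hC _ (hK.pos_mem fun _ => one_pos)
  rw [hf.2.2.2.2.2.2.1, mul_one] at h1
  rw [← h1]
  refine f_mono hK hf (hK.pos_mem fun i => by simpa using hC) fun i => by simpa using hle i

end cone

/-! ### The matrices `γ_η` -/

lemma sqNorm_eq_dot (x : Fin n → ℝ) : sqNorm x = x ⬝ᵥ x := by
  simp [sqNorm, dotProduct, pow_two]

lemma eucNorm_le_one_iff (x : Fin n → ℝ) : eucNorm x ≤ 1 ↔ x ⬝ᵥ x ≤ 1 := by
  rw [eucNorm, sqNorm_eq_dot, Real.sqrt_le_one]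

lemma eucNorm_sq (x : Fin n → ℝ) : eucNorm x ^ 2 = x ⬝ᵥ x := by
  rw [eucNorm, sqNorm_eq_dot, Real.sq_sqrt (dot_nonneg x)]

lemma eucNorm_pos {x : Fin n → ℝ} (h : x ≠ 0) : 0 < eucNorm x := by
  rw [eucNorm, sqNorm_eq_dot]; exact Real.sqrt_pos.2 (dot_pos h)

lemma gammaE_transpose (η : Fin n → ℝ) : (gammaE η)ᵀ = gammaE η := by
  simp [gammaE, transpose_vecMulVec]

lemma gammaE_mulVec (η x : Fin n → ℝ) : gammaE η *ᵥ x = x - (η ⬝ᵥ x) • η := by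
  rw [gammaE, sub_mulVec, one_mulVec, vecMulVec_mulVec]
  simp

lemma gammaE_zero : gammaE (0 : Fin n → ℝ) = 1 := by
  simp [gammaE]

lemma conjM_zero (M : Matrix (Fin n) (Fin n) ℝ) : conjM (gammaE 0) M = M := by
  simp [conjM, gammaE_zero]

lemma quad_conj (η : Fin n → ℝ) (M : Matrix (Fin n) (Fin n) ℝ) (x : Fin n → ℝ) :
    x ⬝ᵥ (conjM (gammaE η) M) *ᵥ x = (gammaE η *ᵥ x) ⬝ᵥ M *ᵥ (gammaE η *ᵥ x) := by
  rw [conjM, ← mulVec_mulVec, ← mulVec_mulVec, dotProduct_mulVec, ← mulVec_transpose,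
    gammaE_transpose]

lemma conjM_herm (η : Fin n → ℝ) {M : Matrix (Fin n) (Fin n) ℝ} (hM : M.IsHermitian) :
    (conjM (gammaE η) M).IsHermitian := by
  have h2 : Mᵀ = M := by simpa [IsHermitian] using hM
  rw [IsHermitian, conjTranspose_eq_transpose_of_trivial, conjM, transpose_mul, transpose_mul,
    gammaE_transpose, h2, mul_assoc]

lemma gammaE_dot_le {η : Fin n → ℝ} (h : η ⬝ᵥ η ≤ 1) (x : Fin n → ℝ) :
    (gammaE η *ᵥ x) ⬝ᵥ (gammaE η *ᵥ x) ≤ x ⬝ᵥ x := by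
  rw [gammaE_mulVec]
  simp only [sub_dotProduct, dotProduct_sub, smul_dotProduct, dotProduct_smul, smul_eq_mul,
    dotProduct_comm x η]
  nlinarith [sq_nonneg (η ⬝ᵥ x)]

lemma LE'.conj (η : Fin n → ℝ) {M N : Matrix (Fin n) (Fin n) ℝ} (h : LE' M N) :
    LE' (conjM (gammaE η) M) (conjM (gammaE η) N) := fun x => by
  rw [quad_conj, quad_conj]; exact h _

lemma gammaP_eq {p η : Fin n → ℝ} (hp : p ≠ 0) (h : eucNorm p • η = p) : gammaP p = gammaE η := by
  have hpos := eucNorm_pos hp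
  rw [gammaP, gammaE, sqNorm_eq_dot, ← eucNorm_sq]
  congr 1
  conv_lhs => rw [← h]
  conv_lhs => rw [h]
  conv_lhs => arg 2; rw [← h]
  rw [vecMulVec_smul, smul_vecMulVec, smul_smul, smul_smul]
  rw [show (eucNorm p ^ 2)⁻¹ * eucNorm p * eucNorm p = 1 by field_simp, one_smul]

lemma herm_symm {D : Matrix (Fin n) (Fin n) ℝ} (hD : D.IsHermitian) (x y : Fin n → ℝ) :
    x ⬝ᵥ D *ᵥ y = y ⬝ᵥ D *ᵥ x := by
  have h2 : Dᵀ = D := by simpa [IsHermitian] using hD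
  rw [dotProduct_mulVec, ← mulVec_transpose, h2, dotProduct_comm]

/-- The optimal choice of `η` at critical points. -/
lemma exists_opt (hn : 0 < n) {D : Matrix (Fin n) (Fin n) ℝ} (hD : D.IsHermitian) :
    ∃ η₁ : Fin n → ℝ, η₁ ⬝ᵥ η₁ ≤ 1 ∧ ∀ η : Fin n → ℝ, η ⬝ᵥ η ≤ 1 → ∀ i,
      (conjM_herm η hD).eigenvalues i ≤ (conjM_herm η₁ hD).eigenvalues i := by
  haveI : Nonempty (Fin n) := ⟨⟨0, hn⟩⟩
  obtain ⟨m, hm⟩ := Finite.exists_min hD.eigenvalues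
  set lam := hD.eigenvalues m with hlam
  have hDlow : ∀ y : Fin n → ℝ, lam * (y ⬝ᵥ y) ≤ y ⬝ᵥ D *ᵥ y := fun y => by
    rw [quad_coo hD, dot_coo hD, Finset.mul_sum]
    exact Finset.sum_le_sum fun j _ => mul_le_mul_of_nonneg_right (hm j) (sq_nonneg _)
  -- the case of a positive eigenvalue
  have hcpos : ∀ (η η₁ : Fin n → ℝ), η ⬝ᵥ η ≤ 1 → LE' D (conjM (gammaE η₁) D) → ∀ i,
      0 < (conjM_herm η hD).eigenvalues i →
      (conjM_herm η hD).eigenvalues i ≤ (conjM_herm η₁ hD).eigenvalues i := by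
    intro η η₁ hη hle i hc
    obtain ⟨V, hV, hV2⟩ := exists_top (conjM_herm η hD) i
    set c := (conjM_herm η hD).eigenvalues i
    let T : V →ₗ[ℝ] (Fin n → ℝ) := (mulVecLin (gammaE η)) ∘ₗ V.subtype
    have hT : Function.Injective T := by
      rw [← LinearMap.ker_eq_bot, LinearMap.ker_eq_bot']
      intro x hx
      have h1 := hV2 x x.2
      have hx' : gammaE η *ᵥ (x : Fin n → ℝ) = 0 := hx
      rw [quad_conj, hx', zero_dotProduct] at h1
      by_contra hne
      have : 0 < (x : Fin n → ℝ) ⬝ᵥ x := dot_pos (by simpa using hne)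
      nlinarith
    refine le_eig_of_subspace _ i (LinearMap.range T) c ?_ ?_
    · rw [LinearMap.finrank_range_of_inj hT]; exact hV
    · rintro _ ⟨x, rfl⟩
      have h1 := hV2 x x.2
      rw [quad_conj] at h1
      have h2 := gammaE_dot_le hη x
      have h3 := hle (T x)
      have hTx : T x = gammaE η *ᵥ (x : Fin n → ℝ) := rfl
      rw [hTx] at h3 ⊢
      nlinarith
  rcases le_or_gt 0 lam with hl | hl
  · refine ⟨0, by simp, fun η hη i => ?_⟩
    rcases lt_or_ge 0 ((conjM_herm η hD).eigenvalues i) with hc | hc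
    · refine hcpos η 0 hη (fun x => by rw [conjM_zero]) i hc
    · obtain ⟨V, hV, -⟩ := exists_top hD i
      refine le_eig_of_subspace _ i V _ hV fun y _ => ?_
      rw [conjM_zero]
      have := hDlow y
      nlinarith [dot_nonneg y]
  · obtain ⟨e, he1, he2⟩ := exists_eigvec hD m
    rw [← hlam] at he2
    have hB : ∀ y : Fin n → ℝ, y ⬝ᵥ (conjM (gammaE e) D) *ᵥ y =
        y ⬝ᵥ D *ᵥ y - lam * (e ⬝ᵥ y) ^ 2 := fun y => by
      have h1 : e ⬝ᵥ D *ᵥ y = lam * (e ⬝ᵥ y) := by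
        rw [herm_symm hD, he2, dotProduct_smul, dotProduct_comm y e]; rfl
      rw [quad_conj, gammaE_mulVec, mulVec_sub, mulVec_smul, he2]
      simp only [sub_dotProduct, dotProduct_sub, smul_dotProduct, dotProduct_smul, smul_eq_mul,
        dotProduct_comm y e, he1, h1]
      ring
    have hBD : LE' D (conjM (gammaE e) D) := fun x => by
      rw [hB]; nlinarith [sq_nonneg (e ⬝ᵥ x)]
    refine ⟨e, he1.le, fun η hη i => ?_⟩
    rcases lt_or_ge 0 ((conjM_herm η hD).eigenvalues i) with hc | hc
    · exact hcpos η e hη hBD i hc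
    obtain ⟨V, hV, hV2⟩ := exists_top (conjM_herm η hD) i
    set c := (conjM_herm η hD).eigenvalues i
    rcases le_or_gt c lam with hcl | hcl
    · refine le_eig_of_subspace _ i V _ hV fun y _ => ?_
      have h1 := hDlow y
      have h2 := hBD y
      nlinarith [dot_nonneg y]
    · let φ : V →ₗ[ℝ] ℝ := (dotProductBilin ℝ ℝ η) ∘ₗ V.subtype
      let W : Submodule ℝ (Fin n → ℝ) := (LinearMap.ker φ).map V.subtype
      have hWf : Module.finrank ℝ V ≤ Module.finrank ℝ W + 1 := by
        have h1 := LinearMap.finrank_range_add_finrank_ker φ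
        have h2 := Submodule.finrank_le (LinearMap.range φ)
        have h3 : Module.finrank ℝ W = Module.finrank ℝ (LinearMap.ker φ) :=
          Submodule.finrank_map_subtype_eq _ _
        simp only [Module.finrank_self] at h2
        omega
      have hW : ∀ x ∈ W, c * (x ⬝ᵥ x) ≤ x ⬝ᵥ D *ᵥ x := by
        rintro _ ⟨x, hx, rfl⟩
        have hx' : η ⬝ᵥ (x : Fin n → ℝ) = 0 := hx
        have h1 := hV2 x x.2
        rw [quad_conj, gammaE_mulVec, hx', zero_smul, sub_zero] at h1
        exact h1
      have heW : e ∉ W := fun h => by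
        have := hW e h
        rw [he2, dotProduct_smul, he1] at this
        simp at this
        linarith
      refine le_eig_of_subspace _ i (W ⊔ Submodule.span ℝ {e}) c ?_ ?_
      · rw [Submodule.finrank_sup_span_singleton heW]; omega
      · intro y hy
        obtain ⟨x, hx, t, ht, rfl⟩ := Submodule.mem_sup.1 hy
        obtain ⟨r, rfl⟩ := Submodule.mem_span_singleton.1 ht
        have h1 := hW x hx
        have h2 : (conjM (gammaE e) D) *ᵥ (x + r • e) = (conjM (gammaE e) D) *ᵥ x := by
          have : gammaE e *ᵥ e = 0 := by rw [gammaE_mulVec, he1]; simp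
          rw [mulVec_add, mulVec_smul, conjM, ← mulVec_mulVec (v := e), this, mulVec_zero, smul_zero,
            add_zero]
        have h3 : e ⬝ᵥ (conjM (gammaE e) D) *ᵥ x = 0 := by
          rw [herm_symm (conjM_herm e hD)]
          have : gammaE e *ᵥ e = 0 := by rw [gammaE_mulVec, he1]; simp
          rw [conjM, ← mulVec_mulVec (v := e), this, mulVec_zero, dotProduct_zero]
        have h4 : (x + r • e) ⬝ᵥ (conjM (gammaE e) D) *ᵥ x = x ⬝ᵥ D *ᵥ x - lam * (e ⬝ᵥ x) ^ 2 := by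
          rw [add_dotProduct, smul_dotProduct, h3, smul_zero, add_zero, hB]
        rw [h2, h4]
        simp only [add_dotProduct, dotProduct_add, smul_dotProduct, dotProduct_smul, smul_eq_mul,
          he1, dotProduct_comm x e]
        have h5 : 0 ≤ (e ⬝ᵥ x + r) ^ 2 := sq_nonneg _
        nlinarith [sq_nonneg (e ⬝ᵥ x)]

/-! ### Continuity in the Loewner order -/

lemma abs_quad_le (D : Matrix (Fin n) (Fin n) ℝ) (x : Fin n → ℝ) :
    |x ⬝ᵥ D *ᵥ x| ≤ (∑ i, ∑ j, |D i j|) * (x ⬝ᵥ x) := by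
  have hx : ∀ i j, |x i * x j| ≤ x ⬝ᵥ x := fun i j => by
    have hi : ∀ i, x i ^ 2 ≤ x ⬝ᵥ x := fun i => by
      rw [← sqNorm_eq_dot]
      exact Finset.single_le_sum (f := fun i => x i ^ 2) (fun _ _ => sq_nonneg _) (Finset.mem_univ i)
    have h1 := hi i
    have h2 := hi j
    rw [abs_le]
    constructor <;> nlinarith [sq_nonneg (x i + x j), sq_nonneg (x i - x j)]
  have e : x ⬝ᵥ D *ᵥ x = ∑ i, ∑ j, D i j * (x i * x j) := by
    simp only [dotProduct, mulVec, Finset.mul_sum]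
    exact Finset.sum_congr rfl fun i _ => Finset.sum_congr rfl fun j _ => by ring
  rw [e, Finset.sum_mul]
  refine (Finset.abs_sum_le_sum_abs _ _).trans (Finset.sum_le_sum fun i _ => ?_)
  rw [Finset.sum_mul]
  refine (Finset.abs_sum_le_sum_abs _ _).trans (Finset.sum_le_sum fun j _ => ?_)
  rw [abs_mul]
  exact mul_le_mul_of_nonneg_left (hx i j) (abs_nonneg _)

lemma tendsto_LE' {ι : Type*} {l : Filter ι} {A : ι → Matrix (Fin n) (Fin n) ℝ}
    {B : Matrix (Fin n) (Fin n) ℝ} (h : Tendsto A l (nhds B)) {ε : ℝ} (hε : 0 < ε) :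
    ∀ᶠ k in l, ∀ x : Fin n → ℝ, |x ⬝ᵥ (A k) *ᵥ x - x ⬝ᵥ B *ᵥ x| ≤ ε * (x ⬝ᵥ x) := by
  have hc : Continuous fun M : Matrix (Fin n) (Fin n) ℝ => ∑ i, ∑ j, |(M - B) i j| := by
    refine continuous_finsetSum _ fun i _ => continuous_finsetSum _ fun j _ => ?_
    exact ((continuous_id.sub continuous_const).matrix_elem i j).abs
  have := (hc.tendsto B).comp h
  simp only [sub_self, Matrix.zero_apply, abs_zero, Finset.sum_const_zero] at this
  filter_upwards [this.eventually_le_const hε] with k hk x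
  rw [← dotProduct_sub, ← sub_mulVec]
  exact (abs_quad_le _ x).trans (mul_le_mul_of_nonneg_right hk (dot_nonneg x))

lemma conjM_continuous : Continuous fun q : (Fin n → ℝ) × Matrix (Fin n) (Fin n) ℝ =>
    conjM (gammaE q.1) q.2 := by
  unfold conjM gammaE
  have : Continuous fun q : (Fin n → ℝ) × Matrix (Fin n) (Fin n) ℝ =>
      (1 - vecMulVec q.1 q.1 : Matrix (Fin n) (Fin n) ℝ) :=
    continuous_const.sub (continuous_fst.matrix_vecMulVec continuous_fst)
  exact (this.matrix_mul continuous_snd).matrix_mul this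

lemma eig_continuous {X : Type*} [TopologicalSpace X] {A : X → Matrix (Fin n) (Fin n) ℝ}
    (hA : Continuous A) (hh : ∀ x, (A x).IsHermitian) : Continuous fun x => (hh x).eigenvalues := by
  rw [continuous_pi_iff]
  intro i
  rw [continuous_iff_continuousAt]
  intro x
  rw [ContinuousAt, Metric.tendsto_nhds]
  intro ε hε
  filter_upwards [tendsto_LE' (hA.tendsto x) (half_pos hε)] with y hy
  have h1 := eig_le (hh y) (hh x) (ε/2) (fun v => by have := abs_le.1 (hy v); linarith [this.2]) i
  have h2 := eig_le (hh x) (hh y) (ε/2) (fun v => by have := abs_le.1 (hy v); linarith [this.1]) i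
  rw [Real.dist_eq, abs_lt]
  constructor <;> linarith

/-! ### The relaxed subsolution condition -/

section QQ
variable {K : Set (Fin n → ℝ)} {f : (Fin n → ℝ) → ℝ}

/-- `η` is an admissible direction for the gradient `p`. -/
def HH (p η : Fin n → ℝ) : Prop := η ⬝ᵥ η ≤ 1 ∧ eucNorm p • η = p

/-- Relaxed condition `τ ≤ F(γ M γ)`. -/
def QQ (K : Set (Fin n → ℝ)) (f : (Fin n → ℝ) → ℝ) (τ : ℝ) (p : Fin n → ℝ)
    (M : Matrix (Fin n) (Fin n) ℝ) : Prop :=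
  τ ≤ 0 ∨ ∃ η, HH p η ∧ ∀ ε : ℝ, 0 < ε →
    eigIn K (conjM (gammaE η) M + ε • (1 : Matrix (Fin n) (Fin n) ℝ)) ∧
    τ ≤ Fof f (conjM (gammaE η) M + ε • (1 : Matrix (Fin n) (Fin n) ℝ))

lemma eucNorm_zero : eucNorm (0 : Fin n → ℝ) = 0 := by simp [eucNorm, sqNorm]

lemma eucNorm_continuous : Continuous (eucNorm : (Fin n → ℝ) → ℝ) := by
  unfold eucNorm sqNorm; fun_prop

lemma HH_exists (p : Fin n → ℝ) : ∃ η, HH p η := by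
  by_cases hp : p = 0
  · exact ⟨0, by simp [HH, hp]⟩
  · have := eucNorm_pos hp
    refine ⟨(eucNorm p)⁻¹ • p, ?_, ?_⟩
    · rw [smul_dotProduct, dotProduct_smul, ← eucNorm_sq]
      simp only [smul_eq_mul]
      field_simp; exact le_rfl
    · rw [smul_smul, mul_inv_cancel₀ this.ne', one_smul]

lemma ball_compact : IsCompact {η : Fin n → ℝ | η ⬝ᵥ η ≤ 1} := by
  refine IsCompact.of_isClosed_subset (isCompact_Icc (a := fun _ => (-1:ℝ)) (b := fun _ => 1)) ?_ ?_
  · exact isClosed_le (by fun_prop) continuous_const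
  · intro η (hη : η ⬝ᵥ η ≤ 1)
    have hi : ∀ i, η i ^ 2 ≤ 1 := fun i => by
      rw [← sqNorm_eq_dot] at hη
      exact (Finset.single_le_sum (f := fun i => η i ^ 2) (fun _ _ => sq_nonneg _)
        (Finset.mem_univ i)).trans hη
    exact ⟨fun i => by nlinarith [hi i], fun i => by nlinarith [hi i]⟩

lemma HH_convex (p : Fin n → ℝ) : Convex ℝ {η | HH p η} := by
  intro η hη ζ hζ a b ha hb hab
  refine ⟨?_, ?_⟩
  · have h := dot_nonneg (η - ζ)
    have h1 := hη.1
    have h2 := hζ.1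
    have hb' : b = 1 - a := by linarith
    subst hb'
    simp only [add_dotProduct, dotProduct_add, smul_dotProduct, dotProduct_smul, smul_eq_mul,
      sub_dotProduct, dotProduct_sub, dotProduct_comm ζ η] at h ⊢
    nlinarith [mul_nonneg (mul_nonneg ha hb) h, mul_nonneg ha (sub_nonneg.2 h1),
      mul_nonneg hb (sub_nonneg.2 h2)]
  · rw [smul_add, smul_comm _ a, smul_comm _ b, hη.2, hζ.2, ← add_smul, hab, one_smul]

lemma HH_limit {p : ℕ → Fin n → ℝ} {η : ℕ → Fin n → ℝ} {p₀ η₀ : Fin n → ℝ}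
    (hp : Tendsto p atTop (nhds p₀)) (hη : Tendsto η atTop (nhds η₀))
    (h1 : η₀ ⬝ᵥ η₀ ≤ 1) (h : ∀ᶠ k in atTop, HH (p k) (η k)) : HH p₀ η₀ := by
  refine ⟨h1, ?_⟩
  have h2 : Tendsto (fun k => eucNorm (p k) • η k) atTop (nhds (eucNorm p₀ • η₀)) :=
    ((eucNorm_continuous.tendsto _).comp hp).smul hη
  refine tendsto_nhds_unique h2 (hp.congr' ?_)
  filter_upwards [h] with k hk using hk.2.symm

lemma QQ.mono (hK : GoodCone K) (hf : GoodF K f) {τ : ℝ} {p : Fin n → ℝ}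
    {M N : Matrix (Fin n) (Fin n) ℝ} (hN : N.IsHermitian) (hMN : LE' M N) (h : QQ K f τ p M) :
    QQ K f τ p N := by
  rcases h with h | ⟨η, hη, h⟩
  · exact Or.inl h
  refine Or.inr ⟨η, hη, fun ε hε => ?_⟩
  have := eigIn_mono hK hf (herm_add_smul (conjM_herm η hN) ε)
    (fun x => by rw [quad_add_smul, quad_add_smul]; have := hMN.conj η x; linarith) (h ε hε).1
  exact ⟨this.1, (h ε hε).2.trans this.2⟩

lemma conjM_tendsto {η : ℕ → Fin n → ℝ} {M : ℕ → Matrix (Fin n) (Fin n) ℝ} {η₀ : Fin n → ℝ}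
    {M₀ : Matrix (Fin n) (Fin n) ℝ} (h1 : Tendsto η atTop (nhds η₀))
    (h2 : Tendsto M atTop (nhds M₀)) :
    Tendsto (fun k => conjM (gammaE (η k)) (M k)) atTop (nhds (conjM (gammaE η₀) M₀)) := by
  have h4 : Tendsto (fun k => (η k, M k)) atTop (nhds (η₀, M₀)) := by
    rw [nhds_prod_eq]; exact h1.prodMk h2
  have h5 := conjM_continuous (n := n)
  set G := (fun q : (Fin n → ℝ) × Matrix (Fin n) (Fin n) ℝ => conjM (gammaE q.1) q.2) with hG
  have h6 := (h5.tendsto (η₀, M₀))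
  have h7 := Tendsto.comp h6 h4
  change Tendsto (fun k => G (η k, M k)) atTop (nhds (G (η₀, M₀)))
  clear_value G
  exact h7

lemma QQ.limit (hK : GoodCone K) (hf : GoodF K f) {τ : ℕ → ℝ} {p : ℕ → Fin n → ℝ}
    {M : ℕ → Matrix (Fin n) (Fin n) ℝ} {τ₀ : ℝ} {p₀ : Fin n → ℝ} {M₀ : Matrix (Fin n) (Fin n) ℝ}
    (hτ : Tendsto τ atTop (nhds τ₀)) (hp : Tendsto p atTop (nhds p₀))
    (hM : Tendsto M atTop (nhds M₀)) (hM₀ : M₀.IsHermitian)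
    (h : ∀ k, QQ K f (τ k) (p k) (M k)) : QQ K f τ₀ p₀ M₀ := by
  rcases le_or_gt τ₀ 0 with h0 | h0
  · exact Or.inl h0
  have hex : ∀ k, ∃ η : Fin n → ℝ, η ⬝ᵥ η ≤ 1 ∧ (0 < τ k → HH (p k) η ∧ ∀ ε : ℝ, 0 < ε →
      eigIn K (conjM (gammaE η) (M k) + ε • (1 : Matrix (Fin n) (Fin n) ℝ)) ∧
      τ k ≤ Fof f (conjM (gammaE η) (M k) + ε • (1 : Matrix (Fin n) (Fin n) ℝ))) := fun k => by
    rcases h k with h | ⟨η, hη, h⟩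
    · exact ⟨0, by simp, fun h' => absurd h' (not_lt.2 h)⟩
    · exact ⟨η, hη.1, fun _ => ⟨hη, h⟩⟩
  choose η hη1 hη2 using hex
  obtain ⟨η₀, hη₀, φ, hφ, hlim⟩ := ball_compact.tendsto_subseq hη1
  have hφt := hφ.tendsto_atTop
  have hpos : ∀ᶠ k in atTop, 0 < τ (φ k) := (hτ.comp hφt).eventually (lt_mem_nhds h0)
  refine Or.inr ⟨η₀, HH_limit (hp.comp hφt) hlim hη₀ ?_, fun ε hε => ?_⟩
  · filter_upwards [hpos] with k hk using (hη2 _ hk).1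
  have hA : Tendsto (fun k => conjM (gammaE (η (φ k))) (M (φ k))) atTop
      (nhds (conjM (gammaE η₀) M₀)) :=
    conjM_tendsto hlim (hM.comp hφt)
  have hev : ∀ᶠ k in atTop,
      eigIn K (conjM (gammaE η₀) M₀ + ε • (1 : Matrix (Fin n) (Fin n) ℝ)) ∧
      τ (φ k) ≤ Fof f (conjM (gammaE η₀) M₀ + ε • (1 : Matrix (Fin n) (Fin n) ℝ)) := by
    filter_upwards [hpos, tendsto_LE' hA (half_pos hε)] with k hk hk2
    have h3 := (hη2 _ hk).2 (ε/2) (half_pos hε)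
    have h4 := eigIn_mono hK hf (herm_add_smul (conjM_herm η₀ hM₀) ε)
      (fun x => by
        rw [quad_add_smul, quad_add_smul]; have := (abs_le.1 (hk2 x)).2; linarith) h3.1
    exact ⟨h4.1, h3.2.trans h4.2⟩
  refine ⟨hev.exists.choose_spec.1, le_of_tendsto (hτ.comp hφt) (hev.mono fun k hk => hk.2)⟩

lemma QQ.of_open (hK : GoodCone K) (hf : GoodF K f) {τ : ℝ} {p : Fin n → ℝ}
    {M : Matrix (Fin n) (Fin n) ℝ} (hM : M.IsHermitian) {η' : Fin n → ℝ} (hη' : HH p η')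
    (hη'K : eigIn K (conjM (gammaE η') M)) (h : ∀ η, HH p η → τ < Fof f (conjM (gammaE η) M)) :
    ∃ δ : ℝ, 0 < δ ∧ ∀ τ' p', |τ' - τ| < δ → dist p' p < δ →
      QQ K f τ' p' (M + (-δ) • (1 : Matrix (Fin n) (Fin n) ℝ)) := by
  rcases lt_or_ge τ 0 with hτ | hτ
  · exact ⟨-τ, by linarith, fun τ' p' h1 _ => Or.inl (by linarith [(abs_lt.1 h1).2])⟩
  have hall : {η | HH p η} ⊆ {η | (conjM_herm η hM).eigenvalues ∈ K} := by
    have hcont : Continuous fun η : Fin n → ℝ => (conjM_herm η hM).eigenvalues :=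
      eig_continuous (conjM_continuous.comp (continuous_id.prodMk continuous_const)) _
    refine (HH_convex p).isPreconnected.subset_of_closure_inter_subset
      (hK.1.preimage hcont) ⟨η', hη', (eigIn_iff (conjM_herm η' hM)).1 hη'K⟩ ?_
    rintro η ⟨hη, hηH⟩
    by_contra hcon
    have h1 : (conjM_herm η hM).eigenvalues ∈ closure K :=
      hcont.closure_preimage_subset K hη
    have h2 : (conjM_herm η hM).eigenvalues ∈ frontier K := by
      rw [hK.1.frontier_eq]; exact ⟨h1, hcon⟩
    have h3 := h η hηH
    rw [Fof_eq (conjM_herm η hM), hf.2.2.2.2.2.1 _ h2] at h3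
    linarith
  by_contra hcon
  push Not at hcon
  have hδ : ∀ k : ℕ, (0:ℝ) < 1 / ((k:ℝ) + 1) := fun k => by positivity
  choose τs ps h1 h2 h3 using fun k : ℕ => hcon _ (hδ k)
  choose η hη using fun k => HH_exists (ps k)
  obtain ⟨η₀, hη₀, φ, hφ, hlim⟩ := ball_compact.tendsto_subseq fun k => (hη k).1
  have hφt := hφ.tendsto_atTop
  have h0 : Tendsto (fun k : ℕ => 1 / ((k:ℝ) + 1)) atTop (nhds 0) :=
    tendsto_one_div_add_atTop_nhds_zero_nat
  have hτs : Tendsto τs atTop (nhds τ) := by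
    rw [tendsto_iff_dist_tendsto_zero]
    exact squeeze_zero (fun _ => dist_nonneg) (fun k => (h1 k).le) h0
  have hps : Tendsto ps atTop (nhds p) := by
    rw [tendsto_iff_dist_tendsto_zero]
    exact squeeze_zero (fun _ => dist_nonneg) (fun k => (h2 k).le) h0
  have hH : HH p η₀ := HH_limit (hps.comp hφt) hlim hη₀ (Eventually.of_forall fun k => hη _)
  have hMk : Tendsto (fun k : ℕ => M + (-(1 / ((k:ℝ) + 1))) • (1 : Matrix (Fin n) (Fin n) ℝ)) atTop
      (nhds M) := by
    have : Tendsto (fun k : ℕ => M + (-(1 / ((k:ℝ) + 1))) • (1 : Matrix (Fin n) (Fin n) ℝ)) atTop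
      (nhds (M + (-(0:ℝ)) • (1 : Matrix (Fin n) (Fin n) ℝ))) :=
      tendsto_const_nhds.add (h0.neg.smul_const _)
    simpa using this
  have hA : Tendsto (fun k => conjM (gammaE (η (φ k)))
      (M + (-(1 / ((φ k:ℝ) + 1))) • (1 : Matrix (Fin n) (Fin n) ℝ))) atTop
      (nhds (conjM (gammaE η₀) M)) :=
    conjM_tendsto hlim (hMk.comp hφt)
  have hAK : eigIn K (conjM (gammaE η₀) M) := ⟨conjM_herm η₀ hM, hall hH⟩
  obtain ⟨ρ, hρ, hρ1, hρ2⟩ : ∃ ρ : ℝ, ρ < 0 ∧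
      eigIn K (conjM (gammaE η₀) M + ρ • (1 : Matrix (Fin n) (Fin n) ℝ)) ∧
      τ < Fof f (conjM (gammaE η₀) M + ρ • (1 : Matrix (Fin n) (Fin n) ℝ)) := by
    have e1 := ((Fof_tendsto hK hf hAK).mono_left
      (nhdsWithin_le_nhds (s := Iio (0:ℝ)))).eventually (lt_mem_nhds (h η₀ hH))
    have e2 := (eigIn_eventually hK hAK).filter_mono (nhdsWithin_le_nhds (s := Iio (0:ℝ)))
    obtain ⟨ρ, h5, h6, h7⟩ := (e1.and (e2.and self_mem_nhdsWithin)).exists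
    exact ⟨ρ, h7, h6, h5⟩
  obtain ⟨k, hk1, hk2⟩ := ((tendsto_LE' hA (neg_pos.2 hρ)).and
    ((hτs.comp hφt).eventually (gt_mem_nhds hρ2))).exists
  refine h3 (φ k) (Or.inr ⟨η (φ k), hη _, fun ε hε => ?_⟩)
  have h4 := eigIn_mono hK hf (herm_add_smul (conjM_herm (η (φ k)) (herm_add_smul hM _)) ε)
      (fun x => by
        rw [quad_add_smul, quad_add_smul]
        have := (abs_le.1 (hk1 x)).1
        have h8 := mul_nonneg hε.le (dot_nonneg x)
        linarith) hρ1
  exact ⟨h4.1, hk2.le.trans h4.2⟩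

lemma QQ.of_forall_add (hK : GoodCone K) (hf : GoodF K f) {τ : ℝ} {p : Fin n → ℝ}
    {M : Matrix (Fin n) (Fin n) ℝ} (hM : M.IsHermitian)
    (h : ∀ ε : ℝ, 0 < ε → QQ K f τ p (M + (2 * ε) • (1 : Matrix (Fin n) (Fin n) ℝ))) :
    QQ K f τ p M := by
  have h0 : Tendsto (fun k : ℕ => 1 / ((k:ℝ) + 1)) atTop (nhds 0) :=
    tendsto_one_div_add_atTop_nhds_zero_nat
  have hMk : Tendsto (fun k : ℕ => M + (2 * (1 / ((k:ℝ) + 1))) • (1 : Matrix (Fin n) (Fin n) ℝ)) atTop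
      (nhds M) := by
    have : Tendsto (fun k : ℕ => M + (2 * (1 / ((k:ℝ) + 1))) • (1 : Matrix (Fin n) (Fin n) ℝ)) atTop
      (nhds (M + (2 * (0:ℝ)) • (1 : Matrix (Fin n) (Fin n) ℝ))) :=
      tendsto_const_nhds.add ((h0.const_mul 2).smul_const _)
    simpa using this
  exact QQ.limit hK hf (τ := fun _ => τ) (p := fun _ => p) tendsto_const_nhds tendsto_const_nhds hMk hM
    fun k => h _ (by positivity)

lemma HH_eq {p η : Fin n → ℝ} (hp : p ≠ 0) (h : HH p η) : gammaP p = gammaE η := gammaP_eq hp h.2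

lemma HH_zero {η : Fin n → ℝ} : HH 0 η ↔ eucNorm η ≤ 1 := by
  rw [eucNorm_le_one_iff]; simp [HH, eucNorm_zero]

/-- Admissibility of a jet. -/
lemma QQ.conclude (hn : 0 < n) (hK : GoodCone K) (hf : GoodF K f) {τ : ℝ} {p : Fin n → ℝ}
    {M : Matrix (Fin n) (Fin n) ℝ} (hM : M.IsHermitian) (h : QQ K f τ p M)
    (ha : p ≠ 0 → eigIn K (conjM (gammaP p) M))
    (hb : p = 0 → ∃ η : Fin n → ℝ, eucNorm η ≤ 1 ∧ eigIn K (conjM (gammaE η) M)) :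
    (p ≠ 0 → τ ≤ Fof f (conjM (gammaP p) M)) ∧
    (p = 0 → ∃ η : Fin n → ℝ, eucNorm η ≤ 1 ∧ τ ≤ Fof f (conjM (gammaE η) M)) := by
  constructor
  · intro hp
    have hK1 := ha hp
    rcases h with h | ⟨η, hη, h⟩
    · exact h.trans (hK1.pos hf).le
    · rw [HH_eq hp hη] at hK1 ⊢
      exact le_Fof_of_forall hK hf hK1 fun ε hε => (h ε hε).2
  · rintro rfl
    obtain ⟨η', h1, h2⟩ := hb rfl
    rcases h with h | ⟨η, hη, h⟩
    · exact ⟨η', h1, h.trans (h2.pos hf).le⟩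
    obtain ⟨η₁, h3, h4⟩ := exists_opt hn hM
    refine ⟨η₁, (eucNorm_le_one_iff _).2 h3, ?_⟩
    have h5 : eigIn K (conjM (gammaE η₁) M) :=
      ⟨conjM_herm η₁ hM, hK.mono ((eigIn_iff (conjM_herm η' hM)).1 h2)
        (h4 η' ((eucNorm_le_one_iff _).1 h1))⟩
    refine le_Fof_of_forall hK hf h5 fun ε hε => ?_
    obtain ⟨h6, h7⟩ := h ε hε
    refine h7.trans ?_
    rw [eigIn_iff (herm_add_smul (conjM_herm η hM) ε)] at h6
    rw [Fof_eq (herm_add_smul (conjM_herm η hM) ε), Fof_eq (herm_add_smul (conjM_herm η₁ hM) ε)]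
    refine f_mono hK hf h6 fun i => ?_
    rw [eig_add_smul (conjM_herm η hM), eig_add_smul (conjM_herm η₁ hM)]
    have := h4 η hη.1 i
    linarith

end QQ

/-! ### Quadratic test functions -/

section quadr
variable {K : Set (Fin n → ℝ)} {f : (Fin n → ℝ) → ℝ}

/-- quadratic test function. -/
def quadr (τ C : ℝ) (p : Fin n → ℝ) (M : Matrix (Fin n) (Fin n) ℝ) (z : (Fin n → ℝ) × ℝ) : ℝ :=
  τ * z.2 + C * z.2 ^ 2 + p ⬝ᵥ z.1 + 1 / 2 * (z.1 ⬝ᵥ M *ᵥ z.1)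

/-- `v` is touched from above at `z₀` by a quadratic. -/
def Touch (v : (Fin n → ℝ) × ℝ → ℝ) (z₀ : (Fin n → ℝ) × ℝ) (τ C : ℝ) (p : Fin n → ℝ)
    (M : Matrix (Fin n) (Fin n) ℝ) : Prop :=
  ∀ᶠ z in nhds z₀, v z - v z₀ ≤ quadr τ C p M (z - z₀)

/-- Subsolution property tested with quadratics. -/
def SubP (K : Set (Fin n → ℝ)) (f : (Fin n → ℝ) → ℝ) (v : (Fin n → ℝ) × ℝ → ℝ) : Prop :=
  ∀ z₀ : (Fin n → ℝ) × ℝ, 0 < z₀.2 → ∀ τ C p (M : Matrix (Fin n) (Fin n) ℝ), M.IsHermitian →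
    Touch v z₀ τ C p M → QQ K f τ p M

lemma quadr_continuous (τ C : ℝ) (p : Fin n → ℝ) (M : Matrix (Fin n) (Fin n) ℝ) :
    Continuous (quadr τ C p M) := by
  unfold quadr dotProduct mulVec dotProduct
  fun_prop

lemma quadr_zero (τ C : ℝ) (p : Fin n → ℝ) (M : Matrix (Fin n) (Fin n) ℝ) :
    quadr τ C p M 0 = 0 := by simp [quadr]

lemma quadr_space (τ C : ℝ) (p : Fin n → ℝ) (M : Matrix (Fin n) (Fin n) ℝ) (r : ℝ) (e : Fin n → ℝ) :
    quadr τ C p M (r • e, 0) = (p ⬝ᵥ e) * r + 1 / 2 * (e ⬝ᵥ M *ᵥ e) * r ^ 2 := by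
  simp only [quadr, mulVec_smul, dotProduct_smul, smul_dotProduct, smul_eq_mul]
  ring

lemma quadr_time (τ C : ℝ) (p : Fin n → ℝ) (M : Matrix (Fin n) (Fin n) ℝ) (r : ℝ) :
    quadr τ C p M (0, r) = τ * r + C * r ^ 2 := by
  simp [quadr]

lemma quadr_add (τ C : ℝ) (p : Fin n → ℝ) (M : Matrix (Fin n) (Fin n) ℝ) (ε a : ℝ)
    (z : (Fin n → ℝ) × ℝ) :
    quadr τ (C + a) p (M + (2 * ε) • (1 : Matrix (Fin n) (Fin n) ℝ)) z =
      quadr τ C p M z + (ε * (z.1 ⬝ᵥ z.1) + a * z.2 ^ 2) := by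
  simp only [quadr, quad_add_smul]; ring

lemma quadr_recenter (τ C : ℝ) (p : Fin n → ℝ) {M : Matrix (Fin n) (Fin n) ℝ} (hM : M.IsHermitian)
    (z w : (Fin n → ℝ) × ℝ) :
    quadr τ C p M (w + z) - quadr τ C p M w =
      quadr (τ + 2 * C * w.2) C (p + M *ᵥ w.1) M z := by
  have h := herm_symm hM w.1 z.1
  have h2 : (M *ᵥ w.1) ⬝ᵥ z.1 = z.1 ⬝ᵥ M *ᵥ w.1 := dotProduct_comm _ _
  simp only [quadr, Prod.fst_add, Prod.snd_add, mulVec_add, dotProduct_add, add_dotProduct, h, h2]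
  ring

lemma dist_sq_le (z z₀ : (Fin n → ℝ) × ℝ) :
    dist z z₀ ^ 2 ≤ ((z - z₀).1 ⬝ᵥ (z - z₀).1) + (z - z₀).2 ^ 2 := by
  rw [dist_eq_norm, Prod.norm_def]
  set w := z - z₀
  have h1 : ‖w.1‖ ^ 2 ≤ w.1 ⬝ᵥ w.1 := by
    rw [← eucNorm_sq]
    have hnn : 0 ≤ eucNorm w.1 := Real.sqrt_nonneg _
    refine pow_le_pow_left₀ (norm_nonneg _) ?_ 2
    rw [pi_norm_le_iff_of_nonneg hnn]
    intro i
    rw [Real.norm_eq_abs]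
    apply Real.abs_le_sqrt
    exact Finset.single_le_sum (f := fun i => w.1 i ^ 2) (fun _ _ => sq_nonneg _) (Finset.mem_univ i)
  have h2 : ‖w.2‖ ^ 2 = w.2 ^ 2 := by rw [Real.norm_eq_abs, sq_abs]
  have h3 := dot_nonneg w.1
  rcases max_cases ‖w.1‖ ‖w.2‖ with h | h <;> rw [h.1]
  · nlinarith [sq_nonneg w.2]
  · linarith

/-- One dimensional expansion lemma. -/
lemma one_dim {α β C : ℝ} (h : ∀ᶠ r : ℝ in nhdsWithin 0 (Ioi 0), 0 ≤ α * r + β * r ^ 2 + C * r ^ 3) :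
    0 ≤ α ∧ (α = 0 → 0 ≤ β) := by
  constructor
  · have ht : Tendsto (fun r : ℝ => α + β * r + C * r ^ 2) (nhdsWithin 0 (Ioi 0)) (nhds α) := by
      have : Continuous fun r : ℝ => α + β * r + C * r ^ 2 := by fun_prop
      have := (this.tendsto 0).mono_left (nhdsWithin_le_nhds (s := Ioi (0:ℝ)))
      simpa using this
    refine ge_of_tendsto ht ?_
    filter_upwards [h, self_mem_nhdsWithin] with r hr (hr0 : 0 < r)
    have : α * r + β * r ^ 2 + C * r ^ 3 = r * (α + β * r + C * r ^ 2) := by ring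
    rw [this] at hr
    exact nonneg_of_mul_nonneg_right hr hr0
  · rintro rfl
    have ht : Tendsto (fun r : ℝ => β + C * r) (nhdsWithin 0 (Ioi 0)) (nhds β) := by
      have : Continuous fun r : ℝ => β + C * r := by fun_prop
      have := (this.tendsto 0).mono_left (nhdsWithin_le_nhds (s := Ioi (0:ℝ)))
      simpa using this
    refine ge_of_tendsto ht ?_
    filter_upwards [h, self_mem_nhdsWithin] with r hr (hr0 : 0 < r)
    have : 0 * r + β * r ^ 2 + C * r ^ 3 = r ^ 2 * (β + C * r) := by ring
    rw [this] at hr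
    exact nonneg_of_mul_nonneg_right hr (by positivity)

lemma eventually_line {P : (Fin n → ℝ) × ℝ → Prop} {z₀ : (Fin n → ℝ) × ℝ} (h : ∀ᶠ z in nhds z₀, P z)
    (w : (Fin n → ℝ) × ℝ) : ∀ᶠ r : ℝ in nhdsWithin 0 (Ioi 0), P (z₀ + r • w) := by
  have hc : Continuous fun r : ℝ => z₀ + r • w := by fun_prop
  have := (hc.tendsto 0).mono_left (nhdsWithin_le_nhds (s := Ioi (0:ℝ)))
  simp only [zero_smul, add_zero] at this
  exact this.eventually h

lemma Touch.of_le {v w : (Fin n → ℝ) × ℝ → ℝ} {z₀ : (Fin n → ℝ) × ℝ} {τ C : ℝ} {p : Fin n → ℝ}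
    {M : Matrix (Fin n) (Fin n) ℝ} (h : Touch w z₀ τ C p M)
    (hvw : ∀ᶠ z in nhds z₀, v z - v z₀ ≤ w z - w z₀) : Touch v z₀ τ C p M := by
  filter_upwards [h, hvw] with z h1 h2 using h2.trans h1

lemma Touch.shift {v : (Fin n → ℝ) × ℝ → ℝ} {a : ℝ} {h z₀ : (Fin n → ℝ) × ℝ} {τ C : ℝ}
    {p : Fin n → ℝ} {M : Matrix (Fin n) (Fin n) ℝ}
    (ht : Touch (fun z => v (z + h) - a) z₀ τ C p M) : Touch v (z₀ + h) τ C p M := by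
  have hc : Continuous fun z : (Fin n → ℝ) × ℝ => z - h := by fun_prop
  have h1 := hc.tendsto (z₀ + h)
  rw [add_sub_cancel_right] at h1
  filter_upwards [h1.eventually ht] with z hz
  simp only [sub_add_cancel] at hz
  have e : z - h - z₀ = z - (z₀ + h) := by abel
  rw [e] at hz
  linarith

lemma SubP.max {v w : (Fin n → ℝ) × ℝ → ℝ} (hv : SubP K f v) (hw : SubP K f w) :
    SubP K f (fun z => max (v z) (w z)) := by
  intro z₀ hz τ C p M hM ht
  rcases le_total (w z₀) (v z₀) with h | h
  · refine hv z₀ hz τ C p M hM (ht.of_le (Eventually.of_forall fun z => ?_))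
    simp only [max_eq_left h]
    linarith [le_max_left (v z) (w z)]
  · refine hw z₀ hz τ C p M hM (ht.of_le (Eventually.of_forall fun z => ?_))
    simp only [max_eq_right h]
    linarith [le_max_right (v z) (w z)]

/-- Comparison of a quadratic with another one touching from above. -/
lemma quadr_compare {τ C τ' C' : ℝ} {p p' : Fin n → ℝ} {M M' : Matrix (Fin n) (Fin n) ℝ}
    {z₀ : (Fin n → ℝ) × ℝ}
    (h : ∀ᶠ z in nhds z₀, quadr τ C p M (z - z₀) ≤ quadr τ' C' p' M' (z - z₀)) :
    τ = τ' ∧ p = p' ∧ LE' M M' := by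
  have hs : ∀ e, p ⬝ᵥ e ≤ p' ⬝ᵥ e ∧ (p ⬝ᵥ e = p' ⬝ᵥ e → e ⬝ᵥ M *ᵥ e ≤ e ⬝ᵥ M' *ᵥ e) := fun e => by
    have h1 := eventually_line h (e, 0)
    have h2 : ∀ᶠ r : ℝ in nhdsWithin 0 (Ioi 0), 0 ≤ (p' ⬝ᵥ e - p ⬝ᵥ e) * r +
        (1/2 * (e ⬝ᵥ M' *ᵥ e) - 1/2 * (e ⬝ᵥ M *ᵥ e)) * r ^ 2 + 0 * r ^ 3 := by
      filter_upwards [h1] with r hr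
      simp only [add_sub_cancel_left, Prod.smul_mk, smul_zero, quadr_space] at hr
      linarith
    have h3 := one_dim h2
    exact ⟨by linarith [h3.1], fun h4 => by have := h3.2 (by linarith); linarith⟩
  have hpe : ∀ e, p ⬝ᵥ e = p' ⬝ᵥ e := fun e => by
    have h1 := (hs e).1
    have h2 := (hs (-e)).1
    simp only [dotProduct_neg] at h2
    linarith
  have ht : ∀ s : ℝ, τ * s ≤ τ' * s := fun s => by
    have h1 := eventually_line h (0, s)
    have h2 : ∀ᶠ r : ℝ in nhdsWithin 0 (Ioi 0), 0 ≤ (τ' * s - τ * s) * r +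
        (C' * s ^ 2 - C * s ^ 2) * r ^ 2 + 0 * r ^ 3 := by
      filter_upwards [h1] with r hr
      simp only [add_sub_cancel_left, Prod.smul_mk, smul_zero, quadr_time, smul_eq_mul] at hr
      linarith
    linarith [(one_dim h2).1]
  refine ⟨by linarith [ht 1, ht (-1)], ?_, fun e => (hs e).2 (hpe e)⟩
  ext i
  have := hpe (Pi.single i 1)
  simpa using this

/-- Perron's lemma: a pointwise supremum of subsolutions is a subsolution. -/
lemma SubP.sup (hK : GoodCone K) (hf : GoodF K f) {𝒮 : Set ((Fin n → ℝ) × ℝ → ℝ)}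
    (hS : ∀ v ∈ 𝒮, Continuous v ∧ SubP K f v) {u : (Fin n → ℝ) × ℝ → ℝ}
    (hle : ∀ v ∈ 𝒮, ∀ z, v z ≤ u z) (hex : ∀ z, ∀ a < u z, ∃ v ∈ 𝒮, a < v z) : SubP K f u := by
  intro z₀ hz₀ τ C p M hM ht
  -- perturbed version
  have key : ∀ ε : ℝ, 0 < ε → QQ K f τ p (M + (2 * ε) • (1 : Matrix (Fin n) (Fin n) ℝ)) := by
    intro ε hε
    set M' := M + (2 * ε) • (1 : Matrix (Fin n) (Fin n) ℝ) with hM'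
    have hMh : M'.IsHermitian := herm_add_smul hM _
    set κ := min ε 1
    have hκ : 0 < κ := lt_min hε one_pos
    obtain ⟨r, hr, hball⟩ := Metric.eventually_nhds_iff_ball.1
      (ht.and (continuous_snd.continuousAt.eventually (lt_mem_nhds hz₀)))
    have hstrict : ∀ z ∈ Metric.ball z₀ r,
        u z ≤ u z₀ + quadr τ (C + 1) p M' (z - z₀) - κ * dist z z₀ ^ 2 := by
      intro z hz
      have h1 := (hball z hz).1
      have h2 := dist_sq_le z z₀
      rw [hM', quadr_add]
      have h3 : κ ≤ ε := min_le_left _ _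
      have h4 : κ ≤ 1 := min_le_right _ _
      have h5 := dot_nonneg (z - z₀).1
      nlinarith [sq_nonneg (z - z₀).2, mul_le_mul_of_nonneg_left h2 hκ.le]
    have step : ∀ δ : ℝ, 0 < δ → ∃ w : (Fin n → ℝ) × ℝ, dist w 0 < δ ∧
        QQ K f (τ + 2 * (C + 1) * w.2) (p + M' *ᵥ w.1) M' := by
      intro δ hδ
      set ρ := min (δ / 2) (r / 2)
      have hρ : 0 < ρ := lt_min (by linarith) (by linarith)
      have hρδ : ρ < δ := (min_le_left _ _).trans_lt (by linarith)
      have hρr : ρ < r := (min_le_right _ _).trans_lt (by linarith)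
      obtain ⟨v, hv, hvz⟩ := hex z₀ (u z₀ - κ * ρ ^ 2) (by have := mul_pos hκ (pow_pos hρ 2); linarith)
      have hcont : Continuous fun z => v z - quadr τ (C + 1) p M' (z - z₀) :=
        (hS v hv).1.sub ((quadr_continuous _ _ _ _).comp (continuous_id.sub continuous_const))
      obtain ⟨z₁, hz₁, hmax⟩ := (isCompact_closedBall z₀ ρ).exists_isMaxOn
        ⟨z₀, Metric.mem_closedBall_self hρ.le⟩ hcont.continuousOn
      have hz₁r : z₁ ∈ Metric.ball z₀ r := lt_of_le_of_lt hz₁ hρr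
      have h1 := hmax (Metric.mem_closedBall_self hρ.le)
      simp only [mem_ofPred_eq, sub_self, quadr_zero] at h1
      have h2 := hstrict z₁ hz₁r
      have h3 := hle v hv z₁
      have h4 : dist z₁ z₀ < ρ := by
        have : κ * dist z₁ z₀ ^ 2 < κ * ρ ^ 2 := by linarith
        exact lt_of_pow_lt_pow_left₀ 2 hρ.le (lt_of_mul_lt_mul_left this hκ.le)
      refine ⟨z₁ - z₀, ?_, ?_⟩
      · rw [dist_zero_right, ← dist_eq_norm]; exact h4.trans hρδ
      · refine (hS v hv).2 z₁ (hball z₁ hz₁r).2 _ (C + 1) _ _ hMh ?_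
        filter_upwards [Metric.isOpen_ball.mem_nhds (show z₁ ∈ Metric.ball z₀ ρ from h4)] with z hz
        have h5 := hmax (Metric.ball_subset_closedBall hz)
        simp only [mem_ofPred_eq] at h5
        rw [← quadr_recenter τ (C+1) p hMh]
        have e : z₁ - z₀ + (z - z₁) = z - z₀ := by abel
        rw [e]; linarith
    choose w hw1 hw2 using fun k : ℕ => step (1 / ((k:ℝ) + 1)) (by positivity)
    have hw : Tendsto w atTop (nhds 0) := by
      rw [tendsto_iff_dist_tendsto_zero]
      exact squeeze_zero (fun _ => dist_nonneg) (fun k => (hw1 k).le)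
        tendsto_one_div_add_atTop_nhds_zero_nat
    refine QQ.limit hK hf (τ := fun k => τ + 2 * (C + 1) * (w k).2) (p := fun k => p + M' *ᵥ (w k).1)
      (M := fun _ => M') ?_ ?_ tendsto_const_nhds hMh hw2
    · have hc : Continuous fun z : (Fin n → ℝ) × ℝ => τ + 2 * (C + 1) * z.2 := by fun_prop
      have := (hc.tendsto 0).comp hw
      simpa [Function.comp_def] using this
    · have hc : Continuous fun z : (Fin n → ℝ) × ℝ => p + M' *ᵥ z.1 :=
        continuous_const.add (continuous_const.matrix_mulVec continuous_fst)
      have := (hc.tendsto 0).comp hw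
      simpa [Function.comp_def] using this
  exact QQ.of_forall_add hK hf hM key

end quadr

/-! ### Euclidean norm -/

lemma eucNorm_eq (x : Fin n → ℝ) : eucNorm x = ‖(WithLp.toLp 2 x : EuclideanSpace ℝ (Fin n))‖ := by
  rw [EuclideanSpace.norm_eq, eucNorm, sqNorm]
  simp

lemma eucNorm_nonneg (x : Fin n → ℝ) : 0 ≤ eucNorm x := Real.sqrt_nonneg _

lemma eucNorm_add (x y : Fin n → ℝ) : eucNorm (x + y) ≤ eucNorm x + eucNorm y := by
  simp only [eucNorm_eq, WithLp.toLp_add]; exact norm_add_le _ _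

lemma eucNorm_neg (x : Fin n → ℝ) : eucNorm (-x) = eucNorm x := by
  simp [eucNorm, sqNorm]

lemma norm_le_eucNorm (x : Fin n → ℝ) : ‖x‖ ≤ eucNorm x := by
  rw [pi_norm_le_iff_of_nonneg (eucNorm_nonneg x)]
  intro i
  rw [Real.norm_eq_abs]
  apply Real.abs_le_sqrt
  exact Finset.single_le_sum (f := fun i => x i ^ 2) (fun _ _ => sq_nonneg _) (Finset.mem_univ i)

/-! ### The obstacle -/

/-- The obstacle. -/
def obst (c B : ℝ) (z : (Fin n → ℝ) × ℝ) : ℝ := c + max 0 (B - eucNorm z.1 - z.2)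

lemma obst_cont (c B : ℝ) : Continuous (obst (n := n) c B) := by
  unfold obst
  have := eucNorm_continuous (n := n)
  fun_prop

lemma obst_space {c B ε : ℝ} {x h : Fin n → ℝ} {t : ℝ} (hh : eucNorm h ≤ ε) :
    obst c B (x + h, t) - ε ≤ obst c B (x, t) := by
  have h0 : eucNorm x ≤ eucNorm (x + h) + eucNorm h := by
    have := eucNorm_add (x + h) (-h)
    rwa [eucNorm_neg, add_neg_cancel_right] at this
  have h1 := eucNorm_nonneg h
  simp only [obst]
  have : max 0 (B - eucNorm (x + h) - t) ≤ max 0 (B - eucNorm x - t) + ε := by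
    apply max_le
    · linarith [le_max_left 0 (B - eucNorm x - t)]
    · linarith [le_max_right 0 (B - eucNorm x - t)]
  linarith

lemma obst_time {c B t s : ℝ} {x : Fin n → ℝ} (hs : 0 ≤ s) : obst c B (x, t + s) ≤ obst c B (x, t) := by
  simp only [obst]
  gcongr
  linarith

lemma obst_time' {c B t s : ℝ} {x : Fin n → ℝ} (hs : 0 ≤ s) :
    obst c B (x, t) - s ≤ obst c B (x, t + s) := by
  simp only [obst]
  have : max 0 (B - eucNorm x - t) ≤ max 0 (B - eucNorm x - (t + s)) + s := by
    apply max_le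
    · linarith [le_max_left 0 (B - eucNorm x - (t + s))]
    · linarith [le_max_right 0 (B - eucNorm x - (t + s))]
  linarith

lemma obst_le {c B : ℝ} (hB : 0 ≤ B) {z : (Fin n → ℝ) × ℝ} (hz : 0 ≤ z.2) : obst c B z ≤ c + B := by
  simp only [obst]
  have := eucNorm_nonneg z.1
  have : max 0 (B - eucNorm z.1 - z.2) ≤ B := max_le hB (by linarith)
  linarith

lemma obst_ge {c B : ℝ} {z : (Fin n → ℝ) × ℝ} : c ≤ obst c B z := by
  simp only [obst]
  linarith [le_max_left 0 (B - eucNorm z.1 - z.2)]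

/-- Properties of the initial data. -/
structure GData (g : (Fin n → ℝ) → ℝ) (c B : ℝ) : Prop where
  cont : Continuous g
  hB : 0 ≤ B
  le_obst : ∀ x, g x ≤ obst c B (x, 0)
  bdd : ∀ x, |g x - c| ≤ B
  uc : ∀ ε : ℝ, 0 < ε → ∃ δ : ℝ, 0 < δ ∧ ∀ x h, eucNorm h ≤ δ → |g (x + h) - g x| ≤ ε

lemma exists_GData {g : (Fin n → ℝ) → ℝ} (hg : Continuous g) {S c : ℝ} (hS : 0 < S)
    (hgc : ∀ x, S ≤ eucNorm x → g x = c) : ∃ B, GData g c B := by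
  have hcpt : IsCompact {x : Fin n → ℝ | eucNorm x ≤ S} := by
    refine (isCompact_closedBall (0 : Fin n → ℝ) S).of_isClosed_subset
      (isClosed_le eucNorm_continuous continuous_const) fun x hx => ?_
    rw [mem_closedBall_zero_iff]
    exact (norm_le_eucNorm x).trans hx
  obtain ⟨M, hM⟩ := hcpt.bddAbove_image (f := fun x => |g x - c|) (by fun_prop)
  have hbd : ∀ x, |g x - c| ≤ max M 0 := fun x => by
    rcases le_total S (eucNorm x) with h | h
    · rw [hgc x h]; simp
    · exact (hM ⟨x, h, rfl⟩).trans (le_max_left _ _)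
  refine ⟨max M 0 + S, hg, by positivity, fun x => ?_, fun x => (hbd x).trans (by linarith), ?_⟩
  · rcases le_total S (eucNorm x) with h | h
    · rw [hgc x h]; exact obst_ge
    · have := (abs_le.1 (hbd x)).2
      simp only [obst]
      linarith [le_max_right 0 (max M 0 + S - eucNorm x - 0)]
  · have huc : UniformContinuous g := by
      refine hg.uniformContinuous_of_tendsto_cocompact (x := c) ?_
      refine tendsto_const_nhds.congr' ?_
      filter_upwards [hcpt.compl_mem_cocompact] with x hx
      exact (hgc x (lt_of_not_ge fun h => hx h).le).symm
    intro ε hε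
    obtain ⟨δ, hδ, h⟩ := Metric.uniformContinuous_iff.1 huc ε hε
    refine ⟨δ / 2, half_pos hδ, fun x y hy => ?_⟩
    have := @h (x + y) x (by
      rw [dist_eq_norm, add_sub_cancel_left]
      exact (norm_le_eucNorm y).trans_lt (by linarith))
    rw [Real.dist_eq] at this
    exact this.le

/-! ### The Perron class -/

section cls
variable {K : Set (Fin n → ℝ)} {f : (Fin n → ℝ) → ℝ} {g : (Fin n → ℝ) → ℝ} {c B : ℝ}

/-- The Perron class. -/
structure InS (K : Set (Fin n → ℝ)) (f : (Fin n → ℝ) → ℝ) (g : (Fin n → ℝ) → ℝ) (c B : ℝ)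
    (v : (Fin n → ℝ) × ℝ → ℝ) : Prop where
  cont : Continuous v
  sub : SubP K f v
  neg : ∀ x t, t ≤ 0 → v (x, t) ≤ g x - t
  pos : ∀ x t, 0 ≤ t → v (x, t) ≤ obst c B (x, t)

lemma subP_g : SubP K f (fun z => g z.1 - z.2) := by
  intro z₀ _ τ C p M hM ht
  left
  have h1 := eventually_line ht (0, -1)
  have h2 : ∀ᶠ r : ℝ in nhdsWithin 0 (Ioi 0), 0 ≤ (-τ - 1) * r + C * r ^ 2 + 0 * r ^ 3 := by
    filter_upwards [h1] with r hr
    simp only [add_sub_cancel_left, Prod.smul_mk, smul_zero, quadr_time, smul_eq_mul, Prod.fst_add,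
      Prod.snd_add, add_zero] at hr
    linarith
  linarith [(one_dim h2).1]

lemma InS_g (hg : GData g c B) : InS K f g c B (fun z => g z.1 - z.2) where
  cont := by have := hg.cont; fun_prop
  sub := subP_g
  neg := fun x t _ => le_rfl
  pos := fun x t ht => by
    have h1 := hg.le_obst x
    have h2 := obst_time' (c := c) (B := B) (t := 0) (x := x) ht
    rw [zero_add] at h2
    simp only
    linarith

lemma InS.max {v w : (Fin n → ℝ) × ℝ → ℝ} (hv : InS K f g c B v) (hw : InS K f g c B w) :
    InS K f g c B (fun z => max (v z) (w z)) where
  cont := hv.cont.max hw.cont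
  sub := hv.sub.max hw.sub
  neg := fun x t ht => max_le (hv.neg x t ht) (hw.neg x t ht)
  pos := fun x t ht => max_le (hv.pos x t ht) (hw.pos x t ht)

lemma InS.space {v : (Fin n → ℝ) × ℝ → ℝ} (hv : InS K f g c B v) {h : Fin n → ℝ} {ε : ℝ}
    (h1 : eucNorm h ≤ ε) (h2 : ∀ x, |g (x + h) - g x| ≤ ε) :
    InS K f g c B (fun z => v (z + (h, 0)) - ε) where
  cont := by have := hv.cont; fun_prop
  sub := fun z₀ hz τ C p M hM ht => hv.sub _ (by simpa using hz) τ C p M hM ht.shift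
  neg := fun x t ht => by
    have := hv.neg (x + h) t ht
    have h3 := (abs_le.1 (h2 x)).2
    simp only [Prod.mk_add_mk, add_zero]
    linarith
  pos := fun x t ht => by
    have := hv.pos (x + h) t ht
    have h3 := obst_space (c := c) (B := B) (t := t) (x := x) h1
    simp only [Prod.mk_add_mk, add_zero]
    linarith

lemma InS.forward {v : (Fin n → ℝ) × ℝ → ℝ} (hv : InS K f g c B v) {ε L s : ℝ} (hε : 0 ≤ ε)
    (hL : 0 ≤ L) (hs : 0 ≤ s) (hbar : ∀ x t, 0 ≤ t → v (x, t) ≤ g x + ε + L * t) :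
    InS K f g c B (fun z => v (z + (0, s)) - (ε + L * s)) where
  cont := by have := hv.cont; fun_prop
  sub := fun z₀ hz τ C p M hM ht =>
    hv.sub _ (by simpa using add_pos_of_pos_of_nonneg hz hs) τ C p M hM ht.shift
  neg := fun x t ht => by
    simp only [Prod.mk_add_mk, add_zero]
    have h3 := mul_nonneg hL hs
    rcases le_total (t + s) 0 with h | h
    · have := hv.neg x (t + s) h
      linarith
    · have := hbar x (t + s) h
      have h4 := mul_nonneg hL (neg_nonneg.2 ht)
      nlinarith
  pos := fun x t ht => by
    simp only [Prod.mk_add_mk, add_zero]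
    have := hv.pos x (t + s) (by linarith)
    have h2 := obst_time (c := c) (B := B) (t := t) (x := x) hs
    have h3 := mul_nonneg hL hs
    linarith

lemma InS.backward (hg : GData g c B) {v : (Fin n → ℝ) × ℝ → ℝ} (hv : InS K f g c B v) {s : ℝ}
    (hs : 0 ≤ s) :
    InS K f g c B (fun z => Max.max (g z.1 - z.2) (v (z + (0, -s)) - s)) where
  cont := by
    have h1 := hv.cont
    have h2 := hg.cont
    fun_prop
  sub := fun z₀ hz τ C p M hM ht => by
    rcases le_or_gt (v (z₀ + (0, -s)) - s) (g z₀.1 - z₀.2) with h | h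
    · refine subP_g (g := g) z₀ hz τ C p M hM (ht.of_le (Eventually.of_forall fun z => ?_))
      simp only [max_eq_left h]
      linarith [le_max_left (g z.1 - z.2) (v (z + (0, -s)) - s)]
    · have h1 : s < z₀.2 := by
        by_contra hcon
        have := hv.neg z₀.1 (z₀.2 + -s) (by linarith)
        have e : z₀ + (0, -s) = (z₀.1, z₀.2 + -s) := by ext <;> simp
        rw [e] at h
        linarith
      have ht2 : Touch (fun z => v (z + (0, -s)) - s) z₀ τ C p M :=
        ht.of_le (Eventually.of_forall fun z => by
          simp only [max_eq_right h.le]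
          linarith [le_max_right (g z.1 - z.2) (v (z + (0, -s)) - s)])
      exact hv.sub _ (by simpa using h1) τ C p M hM ht2.shift
  neg := fun x t ht => by
    simp only [Prod.mk_add_mk, add_zero]
    have := hv.neg x (t + -s) (by linarith)
    exact max_le le_rfl (by linarith)
  pos := fun x t ht => by
    have h1 := (InS_g (K := K) (f := f) hg).pos x t ht
    simp only at h1
    refine max_le h1 ?_
    simp only [Prod.mk_add_mk, add_zero]
    rcases le_total 0 (t + -s) with h | h
    · have := hv.pos x (t + -s) h
      have h2 := obst_time' (c := c) (B := B) (t := t + -s) (x := x) hs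
      rw [neg_add_cancel_right] at h2
      linarith
    · have := hv.neg x (t + -s) h
      linarith

/-- Uniform upper barrier. -/
lemma upper_barrier (hK : GoodCone K) (hf : GoodF K f) (hg : GData g c B) {ε : ℝ} (hε : 0 < ε) :
    ∃ L : ℝ, 0 ≤ L ∧ ∀ v, InS K f g c B v → ∀ x t, 0 ≤ t → v (x, t) ≤ g x + ε + L * t := by
  obtain ⟨δ, hδ, huc⟩ := hg.uc ε hε
  have hB := hg.hB
  set C : ℝ := 2 * B / δ ^ 2 + 1 with hC
  have hC1 : 1 ≤ C := by
    have : 0 ≤ 2 * B / δ ^ 2 := by positivity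
    linarith
  have hgq : ∀ x y, g y ≤ g x + ε + C * ((y - x) ⬝ᵥ (y - x)) := fun x y => by
    rcases le_total (eucNorm (y - x)) δ with h | h
    · have h1 := (abs_le.1 (huc x (y - x) h)).2
      rw [add_sub_cancel] at h1
      have := mul_nonneg (by linarith : 0 ≤ C) (dot_nonneg (y - x))
      linarith
    · have h1 := (abs_le.1 (hg.bdd x)).1
      have h2 := (abs_le.1 (hg.bdd y)).2
      have h3 : δ ^ 2 ≤ (y - x) ⬝ᵥ (y - x) := by
        rw [← eucNorm_sq]; exact pow_le_pow_left₀ hδ.le h 2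
      have h4 : 2 * B ≤ C * δ ^ 2 := by
        rw [hC, add_mul, div_mul_cancel₀ _ (by positivity)]; nlinarith [sq_nonneg δ]
      nlinarith
  refine ⟨2 * C + 1, by linarith, fun v hv x t ht => ?_⟩
  by_contra hcon
  push Not at hcon
  set M : Matrix (Fin n) (Fin n) ℝ := (2 * C) • 1 with hM
  have hMh : M.IsHermitian := by simp [hM, IsHermitian]
  set P : (Fin n → ℝ) × ℝ → ℝ := fun z => quadr (2 * C + 1) 0 0 M (z - (x, 0)) with hP
  have hPe : ∀ z, P z = (2 * C + 1) * z.2 + C * ((z.1 - x) ⬝ᵥ (z.1 - x)) := fun z => by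
    simp only [hP, quadr, hM, smul_mulVec, one_mulVec, dotProduct_smul, smul_eq_mul, Prod.fst_sub,
      Prod.snd_sub, zero_dotProduct, sub_zero]
    ring
  have hcont : Continuous fun z => v z - P z :=
    hv.cont.sub ((quadr_continuous _ _ _ _).comp (continuous_id.sub continuous_const))
  set ρ : ℝ := 2 * B + 1 + t + ‖x - x‖
  have hρ1 : 1 ≤ ρ := by have := norm_nonneg (x - x); linarith
  -- far away
  have hfar : ∀ z : (Fin n → ℝ) × ℝ, 0 ≤ z.2 → 2 * B + 1 ≤ dist z (x, 0) → v z ≤ g x + P z := by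
    intro z hz hd
    have h1 := (hv.pos z.1 z.2 hz).trans (obst_le hB hz)
    have h2 := (abs_le.1 (hg.bdd x)).1
    have h3 := dot_nonneg (z.1 - x)
    rw [hPe]
    rw [dist_eq_norm, Prod.norm_def] at hd
    have h5 : 2 * B ≤ (2 * C + 1) * z.2 + C * ((z.1 - x) ⬝ᵥ (z.1 - x)) := by
      rcases le_max_iff.1 hd with h | h
      · have h6 : ‖z.1 - x‖ ≤ eucNorm (z.1 - x) := norm_le_eucNorm _
        have h7 := eucNorm_sq (z.1 - x)
        have h8 : 2 * B + 1 ≤ eucNorm (z.1 - x) := le_trans h h6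
        nlinarith
      · have h6 : ‖(z - (x, 0)).2‖ = z.2 := by simp [abs_of_nonneg hz]
        rw [h6] at h
        nlinarith
    have e : v z = v (z.1, z.2) := rfl
    rw [e]; linarith
  have hne : (x, t) ∈ Metric.closedBall ((x, 0) : (Fin n → ℝ) × ℝ) ρ ∩ {z | 0 ≤ z.2} := by
    refine ⟨?_, ht⟩
    rw [Metric.mem_closedBall, Prod.dist_eq]
    simp [ρ, abs_of_nonneg ht, ht]
    linarith
  obtain ⟨z₁, hz₁, hmax⟩ := ((isCompact_closedBall ((x, 0) : (Fin n → ℝ) × ℝ) ρ).inter_right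
    (isClosed_le continuous_const continuous_snd)).exists_isMaxOn ⟨_, hne⟩ hcont.continuousOn
  have h1 := hmax hne
  simp only [mem_ofPred_eq] at h1
  have h2 : P (x, t) = (2 * C + 1) * t := by rw [hPe]; simp
  have h3 : g x + ε < v z₁ - P z₁ := by rw [h2] at h1; linarith
  have hz₁0 : 0 ≤ z₁.2 := hz₁.2
  have hpos : 0 < z₁.2 := by
    rcases hz₁0.lt_or_eq with h | h
    · exact h
    · exfalso
      have h4 := hv.neg z₁.1 z₁.2 h.ge
      have h5 := hgq x z₁.1
      rw [hPe] at h3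
      have e : v z₁ = v (z₁.1, z₁.2) := rfl
      rw [e, ← h] at h3
      rw [← h] at h4
      linarith
  have hlt : dist z₁ (x, 0) < ρ := by
    by_contra hcon2
    have := hfar z₁ hz₁0 (le_trans (by have := norm_nonneg (x - x); linarith) (not_lt.1 hcon2))
    linarith
  have hQ := hv.sub z₁ hpos _ 0 _ M hMh (by
    have e1 : ∀ᶠ z : (Fin n → ℝ) × ℝ in nhds z₁, 0 < z.2 :=
      continuous_snd.continuousAt.eventually (lt_mem_nhds hpos)
    filter_upwards [e1, Metric.isOpen_ball.mem_nhds (show z₁ ∈ Metric.ball (x, 0) ρ from hlt)]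
      with z h4 h5
    have h6 := hmax ⟨Metric.ball_subset_closedBall h5, h4.le⟩
    simp only [mem_ofPred_eq] at h6
    have h7 := quadr_recenter (2 * C + 1) 0 0 hMh (z - z₁) (z₁ - (x, 0))
    have e : z₁ - (x, 0) + (z - z₁) = z - (x, 0) := by abel
    rw [e] at h7
    rw [← h7]
    simp only [hP] at h6
    linarith)
  rcases hQ with h | ⟨η, hη, h⟩
  · simp at h; linarith
  · obtain ⟨h4, h5⟩ := h (1/2) (by norm_num)
    have h6 := Fof_le hK hf (C := 2 * C + 1/2) (by linarith) h4 (fun y => by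
      rw [quad_add_smul, quad_conj]
      simp only [hM, smul_mulVec, one_mulVec, dotProduct_smul, smul_eq_mul]
      have := gammaE_dot_le hη.1 y
      nlinarith)
    simp at h5
    simp at h6
    linarith

end cls

section lower
variable {K : Set (Fin n → ℝ)} {f : (Fin n → ℝ) → ℝ} {g : (Fin n → ℝ) → ℝ} {c B : ℝ}

lemma F_proj (hn : 2 ≤ n) (hK : GoodCone K) (hf : GoodF K f) {A : Matrix (Fin n) (Fin n) ℝ}
    (hA : A.IsHermitian) {η : Fin n → ℝ} (hη : η ⬝ᵥ η = 1) {k : ℝ} (hk : 0 < k)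
    (h : ∀ x : Fin n → ℝ, k * (x ⬝ᵥ x - (η ⬝ᵥ x) ^ 2) ≤ x ⬝ᵥ A *ᵥ x) :
    ∃ m, eigIn K A ∧ k * f ((fun _ => 1) - Pi.single m 1) ≤ Fof f A := by
  have : Nonempty (Fin n) := ⟨⟨0, by omega⟩⟩
  obtain ⟨m, hm⟩ := Finite.exists_max (posi : Fin n → _)
  have hle : ∀ i, (k • ((fun _ => 1) - Pi.single m 1 : Fin n → ℝ)) i ≤ hA.eigenvalues i := by
    intro i
    by_cases him : i = m
    · subst him
      simp only [Pi.smul_apply, Pi.sub_apply, Pi.single_eq_same, sub_self, smul_zero]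
      refine le_eig_of_subspace hA i ⊤ 0 ?_ fun y _ => ?_
      · rw [finrank_top, Module.finrank_fin_fun]
        conv_rhs => rw [← Fintype.card_fin n]
        exact Fintype.card_subtype_lt (x := i) (lt_irrefl _)
      · rw [zero_mul]
        refine le_trans (mul_nonneg hk.le ?_) (h y)
        have h1 := dot_nonneg (y - (η ⬝ᵥ y) • η)
        simp only [sub_dotProduct, dotProduct_sub, smul_dotProduct, dotProduct_smul, smul_eq_mul,
          dotProduct_comm y η, hη] at h1
        nlinarith
    · have e : (k • ((fun _ => 1) - Pi.single m 1 : Fin n → ℝ)) i = k := by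
        simp [Pi.single_apply, him]
      rw [e]
      refine le_eig_of_subspace hA i (LinearMap.ker (dotProductBilin ℝ ℝ η)) k ?_ fun y hy => ?_
      · have h1 := LinearMap.finrank_range_add_finrank_ker (dotProductBilin ℝ ℝ η)
        have h2 := Submodule.finrank_le (LinearMap.range (dotProductBilin ℝ ℝ η))
        simp only [Module.finrank_self, Module.finrank_fin_fun] at h1 h2
        have h3 : Fintype.card {j : Fin n // posi j < posi i} ≤ n - 2 := by
          rw [Fintype.card_subtype]
          have h4 : (Finset.univ.filter fun j : Fin n => posi j < posi i) ⊆
              (Finset.univ.erase i).erase m := by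
            intro j hj
            simp only [Finset.mem_filter, Finset.mem_univ, true_and] at hj
            simp only [Finset.mem_erase, Finset.mem_univ, and_true]
            refine ⟨?_, ?_⟩
            · rintro rfl; exact absurd (hm i) (not_le.2 hj)
            · rintro rfl; exact lt_irrefl _ hj
          refine (Finset.card_le_card h4).trans ?_
          rw [Finset.card_erase_of_mem (by simp [Ne.symm him]),
            Finset.card_erase_of_mem (by simp), Finset.card_univ, Fintype.card_fin]
          omega
        omega
      · have hy' : η ⬝ᵥ y = 0 := hy
        have := h y
        rw [hy'] at this
        simpa using this
  have hmem := hK.sub_single_mem m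
  have hmem2 := hK.2.2.1 k hk _ hmem
  refine ⟨m, (eigIn_iff hA).2 (hK.mono hmem2 hle), ?_⟩
  rw [Fof_eq hA, ← hf.2.2.2.2.2.2.2 k hk _ hmem]
  exact f_mono hK hf hmem2 hle

/-- Lower barrier. -/
def lowb (c Q R a : ℝ) (z : (Fin n → ℝ) × ℝ) : ℝ :=
  c - Q * max (R - z.1 ⬝ᵥ z.1 - 2 * a * z.2) 0 ^ 2

lemma QQ.le_left {τ τ' : ℝ} {p : Fin n → ℝ} {M : Matrix (Fin n) (Fin n) ℝ} (h : QQ K f τ p M)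
    (hτ : τ' ≤ τ) : QQ K f τ' p M := by
  rcases h with h | ⟨η, h1, h2⟩
  · exact Or.inl (hτ.trans h)
  · exact Or.inr ⟨η, h1, fun ε hε => ⟨(h2 ε hε).1, hτ.trans (h2 ε hε).2⟩⟩

lemma QQ.of_eigIn (hK : GoodCone K) (hf : GoodF K f) {τ : ℝ} {p : Fin n → ℝ}
    {M : Matrix (Fin n) (Fin n) ℝ} (hM : M.IsHermitian) {η : Fin n → ℝ} (hη : HH p η)
    (h : eigIn K (conjM (gammaE η) M)) (hτ : τ ≤ Fof f (conjM (gammaE η) M)) : QQ K f τ p M := by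
  refine Or.inr ⟨η, hη, fun ε hε => ?_⟩
  have := eigIn_mono hK hf (herm_add_smul (conjM_herm η hM) ε)
    (fun x => by rw [quad_add_smul]; have := mul_nonneg hε.le (dot_nonneg x); linarith) h
  exact ⟨this.1, hτ.trans this.2⟩

lemma subP_lowb (hn : 2 ≤ n) (hK : GoodCone K) (hf : GoodF K f) {Q R a : ℝ} (hQ : 0 < Q)
    (ha : 0 < a) (ha1 : a ≤ 1) (ha2 : ∀ i, a ≤ f ((fun _ => 1) - Pi.single i 1)) :
    SubP K f (lowb c Q R a) := by
  intro z₀ _ τ C p M hM ht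
  set s₀ := R - z₀.1 ⬝ᵥ z₀.1 - 2 * a * z₀.2 with hs₀
  have hv0 : lowb c Q R a z₀ = c - Q * max s₀ 0 ^ 2 := rfl
  have hlow : ∀ z : (Fin n → ℝ) × ℝ, c - Q * (R - z.1 ⬝ᵥ z.1 - 2 * a * z.2) ^ 2 ≤ lowb c Q R a z := fun z => by
    simp only [lowb]
    have : max (R - z.1 ⬝ᵥ z.1 - 2 * a * z.2) 0 ^ 2 ≤ (R - z.1 ⬝ᵥ z.1 - 2 * a * z.2) ^ 2 := by
      rcases le_total (R - z.1 ⬝ᵥ z.1 - 2 * a * z.2) 0 with h | h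
      · rw [max_eq_right h]; simpa using sq_nonneg (R - z.1 ⬝ᵥ z.1 - 2 * a * z.2)
      · rw [max_eq_left h]
    nlinarith
  rcases le_or_gt s₀ 0 with h0 | h0
  · left
    rw [max_eq_right h0] at hv0
    have h1 := eventually_line ht (0, -1)
    have h2 : ∀ᶠ r : ℝ in nhdsWithin 0 (Ioi 0), 0 ≤ (-τ) * r + (C + Q * (2 * a) ^ 2) * r ^ 2 + 0 * r ^ 3 := by
      filter_upwards [h1, self_mem_nhdsWithin] with r hr (hr0 : 0 < r)
      simp only [add_sub_cancel_left, Prod.smul_mk, smul_zero, quadr_time, smul_eq_mul] at hr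
      rw [hv0] at hr
      simp only [lowb, Prod.fst_add, Prod.snd_add, add_zero] at hr
      have h3 : max (R - z₀.1 ⬝ᵥ z₀.1 - 2 * a * (z₀.2 + r * -1)) 0 ≤ 2 * a * r := by
        apply max_le _ (by positivity)
        rw [hs₀] at h0
        linarith
      have h4 := pow_le_pow_left₀ (le_max_right _ _) h3 2
      nlinarith
    linarith [(one_dim h2).1]
  · rw [max_eq_left h0.le] at hv0
    have hτ : τ ≤ 4 * a * Q * s₀ := by
      have h1 := eventually_line ht (0, -1)
      have h2 : ∀ᶠ r : ℝ in nhdsWithin 0 (Ioi 0),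
          0 ≤ (4 * a * Q * s₀ - τ) * r + (C + Q * (2 * a) ^ 2) * r ^ 2 + 0 * r ^ 3 := by
        filter_upwards [h1, self_mem_nhdsWithin] with r hr (hr0 : 0 < r)
        simp only [add_sub_cancel_left, Prod.smul_mk, smul_zero, quadr_time, smul_eq_mul] at hr
        rw [hv0] at hr
        have h3 := hlow (z₀ + (0, r * -1))
        simp only [Prod.fst_add, Prod.snd_add, add_zero] at h3
        have e : R - z₀.1 ⬝ᵥ z₀.1 - 2 * a * (z₀.2 + r * -1) = s₀ + 2 * a * r := by rw [hs₀]; ring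
        rw [e] at h3
        nlinarith
      linarith [(one_dim h2).1]
    have hspace : ∀ e : Fin n → ℝ, 0 ≤ p ⬝ᵥ e - 4 * Q * s₀ * (z₀.1 ⬝ᵥ e) ∧
        (p ⬝ᵥ e - 4 * Q * s₀ * (z₀.1 ⬝ᵥ e) = 0 →
          4 * Q * s₀ * (e ⬝ᵥ e) - 8 * Q * (z₀.1 ⬝ᵥ e) ^ 2 ≤ e ⬝ᵥ M *ᵥ e) := by
      intro e
      have h1 := eventually_line ht (e, 0)
      set b := z₀.1 ⬝ᵥ e with hb
      set q := e ⬝ᵥ e with hq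
      have h2 : ∀ᶠ r : ℝ in nhdsWithin 0 (Ioi 0),
          0 ≤ (p ⬝ᵥ e - 4 * Q * s₀ * b) * r + (1/2 * (e ⬝ᵥ M *ᵥ e) - 2 * Q * s₀ * q + 4 * Q * b ^ 2) * r ^ 2
            + (4 * Q * b * q + Q * q ^ 2) * r ^ 3 := by
        filter_upwards [h1, Ioo_mem_nhdsGT (zero_lt_one : (0:ℝ) < 1)] with r hr hr0
        simp only [add_sub_cancel_left, Prod.smul_mk, smul_zero, quadr_space] at hr
        rw [hv0] at hr
        have h3 := hlow (z₀ + (r • e, 0))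
        simp only [Prod.fst_add, Prod.snd_add, add_zero, add_dotProduct, dotProduct_add,
          smul_dotProduct, dotProduct_smul, smul_eq_mul, dotProduct_comm e z₀.1] at h3
        rw [← hb, ← hq] at h3
        have e1 : R - (z₀.1 ⬝ᵥ z₀.1 + r * b + r * (b + r * q)) - 2 * a * z₀.2 =
          s₀ - (2 * b * r + q * r ^ 2) := by rw [hs₀]; ring
        rw [e1] at h3
        have h5 : Q * q ^ 2 * r ^ 4 ≤ Q * q ^ 2 * r ^ 3 := by
          apply mul_le_mul_of_nonneg_left _ (by positivity)
          exact pow_le_pow_of_le_one hr0.1.le hr0.2.le (by norm_num)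
        nlinarith
      have h3 := one_dim h2
      refine ⟨h3.1, fun h4 => ?_⟩
      have := h3.2 h4
      linarith
    have hpe : ∀ e, p ⬝ᵥ e - 4 * Q * s₀ * (z₀.1 ⬝ᵥ e) = 0 := fun e => by
      have h1 := (hspace e).1
      have h2 := (hspace (-e)).1
      simp only [dotProduct_neg] at h2
      linarith
    have hp : p = (4 * Q * s₀) • z₀.1 := by
      ext i
      have := hpe (Pi.single i 1)
      simp at this ⊢
      linarith
    set k := 4 * Q * s₀ with hk
    have hk0 : 0 < k := by positivity
    have hτk : τ ≤ a * k := by rw [hk]; linarith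
    have hMe : ∀ e : Fin n → ℝ, k * (e ⬝ᵥ e) - 8 * Q * (z₀.1 ⬝ᵥ e) ^ 2 ≤ e ⬝ᵥ M *ᵥ e :=
      fun e => (hspace e).2 (hpe e)
    refine QQ.le_left ?_ hτk
    by_cases hx : z₀.1 = 0
    · have hH : HH p 0 := by rw [hp, hx]; simp [HH]
      have h1 := le_Fof hK hf hk0 hM (fun e => by
        have := hMe e
        rw [hx, zero_dotProduct] at this
        linarith)
      refine QQ.of_eigIn hK hf hM hH ?_ ?_ <;> rw [conjM_zero]
      · exact h1.1
      · nlinarith [h1.2]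
    · have hp0 : p ≠ 0 := by rw [hp]; exact smul_ne_zero hk0.ne' hx
      obtain ⟨η, hη⟩ := HH_exists p
      have hpn := eucNorm_pos hp0
      have hη1 : η ⬝ᵥ η = 1 := by
        have h1 := eucNorm_sq p
        have h2 : p ⬝ᵥ p = eucNorm p * (eucNorm p * (η ⬝ᵥ η)) := by
          conv_lhs => rw [← hη.2]
          rw [smul_dotProduct, dotProduct_smul]; rfl
        rw [h2] at h1
        have : eucNorm p ^ 2 * (η ⬝ᵥ η - 1) = 0 := by linarith
        rcases mul_eq_zero.1 this with h | h
        · exact absurd h (by positivity)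
        · linarith
      obtain ⟨m, h1, h2⟩ := F_proj hn hK hf (conjM_herm η hM) hη1 hk0 (fun x => by
        rw [quad_conj]
        have h3 := hMe (gammaE η *ᵥ x)
        have h4 : η ⬝ᵥ (gammaE η *ᵥ x) = 0 := by
          rw [gammaE_mulVec, dotProduct_sub, dotProduct_smul, hη1]; simp
        have h5 : z₀.1 ⬝ᵥ (gammaE η *ᵥ x) = 0 := by
          have h6 : k • z₀.1 = eucNorm p • η := by rw [hη.2, hp]
          have h7 : k * (z₀.1 ⬝ᵥ (gammaE η *ᵥ x)) = 0 := by
            rw [← smul_eq_mul, ← smul_dotProduct, h6, smul_dotProduct, h4, smul_zero]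
          exact (mul_eq_zero.1 h7).resolve_left hk0.ne'
        have h6 : (gammaE η *ᵥ x) ⬝ᵥ (gammaE η *ᵥ x) = x ⬝ᵥ x - (η ⬝ᵥ x) ^ 2 := by
          rw [gammaE_mulVec]
          simp only [sub_dotProduct, dotProduct_sub, smul_dotProduct, dotProduct_smul, smul_eq_mul,
            dotProduct_comm x η, hη1]
          ring
        rw [h5, h6] at h3
        linarith)
      refine QQ.of_eigIn hK hf hM hη h1 (le_trans ?_ h2)
      have := ha2 m
      nlinarith

lemma InS_lowb (hn : 2 ≤ n) (hK : GoodCone K) (hf : GoodF K f) (hg : GData g c B) {S : ℝ} 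
    (hgc : ∀ x, S ≤ eucNorm x → g x = c) {a : ℝ}
    (ha : 0 < a) (ha1 : a ≤ 1) (ha2 : ∀ i, a ≤ f ((fun _ => 1) - Pi.single i 1)) :
    InS K f g c B (lowb c (B + 1) (S ^ 2 + 1) a) := by
  have hB := hg.hB
  have hlec : ∀ z : (Fin n → ℝ) × ℝ, lowb c (B + 1) (S ^ 2 + 1) a z ≤ c := fun z => by
    simp only [lowb]
    have : 0 ≤ (B + 1) * max (S ^ 2 + 1 - z.1 ⬝ᵥ z.1 - 2 * a * z.2) 0 ^ 2 := by positivity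
    linarith
  refine ⟨?_, subP_lowb hn hK hf (by linarith) ha ha1 ha2, fun x t ht => ?_, fun x t ht => ?_⟩
  · unfold lowb dotProduct; fun_prop
  · rcases le_total S (eucNorm x) with h | h
    · rw [hgc x h]
      have := hlec (x, t)
      linarith
    · have h1 := (abs_le.1 (hg.bdd x)).1
      have h2 : x ⬝ᵥ x ≤ S ^ 2 := by
        rw [← eucNorm_sq]; exact pow_le_pow_left₀ (eucNorm_nonneg x) h 2
      have h3 : 1 ≤ max (S ^ 2 + 1 - x ⬝ᵥ x - 2 * a * t) 0 := by
        refine le_trans ?_ (le_max_left _ _)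
        nlinarith
      have h4 : 1 ≤ max (S ^ 2 + 1 - x ⬝ᵥ x - 2 * a * t) 0 ^ 2 := one_le_pow₀ h3
      simp only [lowb]
      nlinarith
  · exact (hlec _).trans obst_ge

end lower

section perron
variable {K : Set (Fin n → ℝ)} {f : (Fin n → ℝ) → ℝ} {g : (Fin n → ℝ) → ℝ} {c B : ℝ}

/-- The Perron solution. -/
def perr (K : Set (Fin n → ℝ)) (f : (Fin n → ℝ) → ℝ) (g : (Fin n → ℝ) → ℝ) (c B : ℝ)
    (z : (Fin n → ℝ) × ℝ) : ℝ := sSup {y | ∃ v, InS K f g c B v ∧ y = v z}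

lemma perr_bdd (z : (Fin n → ℝ) × ℝ) : BddAbove {y | ∃ v, InS K f g c B v ∧ y = v z} := by
  obtain ⟨x, t⟩ := z
  rcases le_total t 0 with h | h
  · exact ⟨g x - t, by rintro y ⟨v, hv, rfl⟩; exact hv.neg x t h⟩
  · exact ⟨obst c B (x, t), by rintro y ⟨v, hv, rfl⟩; exact hv.pos x t h⟩

lemma le_perr {v : (Fin n → ℝ) × ℝ → ℝ} (hv : InS K f g c B v) (z : (Fin n → ℝ) × ℝ) :
    v z ≤ perr K f g c B z := le_csSup (perr_bdd z) ⟨v, hv, rfl⟩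

lemma perr_le (hg : GData g c B) {z : (Fin n → ℝ) × ℝ} {a : ℝ}
    (h : ∀ v, InS K f g c B v → v z ≤ a) : perr K f g c B z ≤ a :=
  csSup_le ⟨_, _, InS_g hg, rfl⟩ (by rintro y ⟨v, hv, rfl⟩; exact h v hv)

lemma exists_lt_perr (hg : GData g c B) {z : (Fin n → ℝ) × ℝ} {a : ℝ} (h : a < perr K f g c B z) :
    ∃ v, InS K f g c B v ∧ a < v z := by
  by_contra hc
  push Not at hc
  exact absurd (perr_le hg hc) (not_le.2 h)

lemma perr_neg (hg : GData g c B) {x : Fin n → ℝ} {t : ℝ} (ht : t ≤ 0) :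
    perr K f g c B (x, t) = g x - t :=
  le_antisymm (perr_le hg fun _ hv => hv.neg x t ht) (le_perr (InS_g hg) (x, t))

lemma perr_space (hg : GData g c B) {h : Fin n → ℝ} {ε : ℝ}
    (h1 : eucNorm h ≤ ε) (h2 : ∀ x, |g (x + h) - g x| ≤ ε) (x : Fin n → ℝ) (t : ℝ) :
    |perr K f g c B (x + h, t) - perr K f g c B (x, t)| ≤ ε := by
  have key : ∀ (h : Fin n → ℝ), eucNorm h ≤ ε → (∀ x, |g (x + h) - g x| ≤ ε) → ∀ x,
      perr K f g c B (x + h, t) ≤ perr K f g c B (x, t) + ε := by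
    intro h h1 h2 x
    refine perr_le hg fun v hv => ?_
    have := le_perr (hv.space h1 h2) (x, t)
    simp only [Prod.mk_add_mk, add_zero] at this
    linarith
  have a1 := key h h1 h2 x
  have a2 := key (-h) (by rw [eucNorm_neg]; exact h1) (fun x => by
    have := h2 (x + -h)
    rw [neg_add_cancel_right, abs_sub_comm] at this
    exact this) (x + h)
  rw [add_neg_cancel_right] at a2
  rw [abs_le]; constructor <;> linarith

lemma perr_time (hK : GoodCone K) (hf : GoodF K f) (hg : GData g c B) {ε : ℝ} (hε : 0 < ε) :
    ∃ L : ℝ, 0 ≤ L ∧ ∀ x t t', |perr K f g c B (x, t') - perr K f g c B (x, t)| ≤ ε + L * |t' - t| := by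
  obtain ⟨L, hL, hbar⟩ := upper_barrier hK hf hg hε
  refine ⟨L + 1, by linarith, ?_⟩
  have key : ∀ x t s, 0 ≤ s → |perr K f g c B (x, t + s) - perr K f g c B (x, t)| ≤ ε + (L + 1) * s := by
    intro x t s hs
    have a1 : perr K f g c B (x, t + s) ≤ perr K f g c B (x, t) + (ε + L * s) := by
      refine perr_le hg fun v hv => ?_
      have := le_perr (hv.forward hε.le hL hs (hbar v hv)) (x, t)
      simp only [Prod.mk_add_mk, add_zero] at this
      linarith
    have a2 : perr K f g c B (x, t) ≤ perr K f g c B (x, t + s) + s := by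
      refine perr_le hg fun v hv => ?_
      have := (le_max_right _ _).trans (le_perr (InS.backward hg hv hs) (x, t + s))
      simp only [Prod.mk_add_mk, add_zero, add_neg_cancel_right] at this
      linarith
    have := mul_nonneg hL hs
    rw [abs_le]; constructor <;> linarith
  intro x t t'
  rcases le_total t t' with h | h
  · have := key x t (t' - t) (by linarith)
    rw [abs_of_nonneg (by linarith : 0 ≤ t' - t)]
    simpa using this
  · have := key x t' (t - t') (by linarith)
    rw [abs_sub_comm, abs_sub_comm t' t, abs_of_nonneg (by linarith : 0 ≤ t - t')]
    simpa using this

lemma perr_cont (hK : GoodCone K) (hf : GoodF K f) (hg : GData g c B) :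
    Continuous (perr K f g c B) := by
  rw [continuous_iff_continuousAt]
  rintro ⟨x, t⟩
  rw [ContinuousAt, Metric.tendsto_nhds]
  intro ε hε
  obtain ⟨L, hL, hT⟩ := perr_time hK hf hg (ε := ε / 4) (by linarith)
  obtain ⟨δ, hδ, huc⟩ := hg.uc (ε / 4) (by linarith)
  have e1 : ∀ᶠ z : (Fin n → ℝ) × ℝ in nhds (x, t), eucNorm (z.1 - x) < min δ (ε / 4) := by
    have hc : Continuous fun z : (Fin n → ℝ) × ℝ => eucNorm (z.1 - x) := by
      have := eucNorm_continuous (n := n)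
      fun_prop
    have := hc.tendsto (x, t)
    simp only [sub_self, eucNorm_zero] at this
    exact this.eventually_lt_const (by positivity)
  have e2 : ∀ᶠ z : (Fin n → ℝ) × ℝ in nhds (x, t), L * |z.2 - t| < ε / 4 := by
    have hc : Continuous fun z : (Fin n → ℝ) × ℝ => L * |z.2 - t| := by fun_prop
    have := hc.tendsto (x, t)
    simp only [sub_self, abs_zero, mul_zero] at this
    exact this.eventually_lt_const (by positivity)
  filter_upwards [e1, e2] with z h1 h2
  have h3 := (lt_min_iff.1 h1).1
  have h4 := (lt_min_iff.1 h1).2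
  have a1 := perr_space (K := K) (f := f) hg h4.le (fun y => huc y _ h3.le) x z.2
  have a2 := hT x t z.2
  rw [add_sub_cancel] at a1
  rw [Real.dist_eq]
  have e : perr K f g c B z - perr K f g c B (x, t) =
    (perr K f g c B (z.1, z.2) - perr K f g c B (x, z.2)) +
    (perr K f g c B (x, z.2) - perr K f g c B (x, t)) := by ring
  rw [e]
  refine (abs_add_le _ _).trans_lt ?_
  linarith

lemma perr_InS (hK : GoodCone K) (hf : GoodF K f) (hg : GData g c B) :
    InS K f g c B (perr K f g c B) where
  cont := perr_cont hK hf hg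
  sub := SubP.sup hK hf (𝒮 := {v | InS K f g c B v}) (fun v hv => ⟨InS.cont hv, InS.sub hv⟩)
    (fun v hv z => le_perr hv z) (fun z a ha => exists_lt_perr hg ha)
  neg := fun x t ht => (perr_neg hg ht).le
  pos := fun x t ht => perr_le hg fun v hv => hv.pos x t ht

end perron

section taylor

lemma taylor2 {E : Type*} [NormedAddCommGroup E] [NormedSpace ℝ E] {φ : E → ℝ}
    (hφ : ContDiff ℝ 2 φ) (z₀ : E) {ε : ℝ} (hε : 0 < ε) :
    ∀ᶠ z in nhds z₀, |φ z - φ z₀ - fderiv ℝ φ z₀ (z - z₀) -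
      1 / 2 * fderiv ℝ (fderiv ℝ φ) z₀ (z - z₀) (z - z₀)| ≤ ε * ‖z - z₀‖ ^ 2 := by
  set A := fderiv ℝ (fderiv ℝ φ) z₀ with hA
  have hd : ContDiff ℝ 1 (fderiv ℝ φ) := hφ.fderiv_right (by norm_num)
  have hA1 : HasFDerivAt (fderiv ℝ φ) A z₀ :=
    (hd.differentiable (by norm_num) z₀).hasFDerivAt
  have hsymm : ∀ a b, A a b = A b a := by
    have : IsSymmSndFDerivAt ℝ φ z₀ := (hφ.contDiffAt).isSymmSndFDerivAt (by simp)
    intro a b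
    exact this a b
  have h1 := hA1.isLittleO.def hε
  obtain ⟨r, hr, hball⟩ := Metric.eventually_nhds_iff_ball.1 h1
  filter_upwards [Metric.ball_mem_nhds z₀ hr] with z hz
  set k : E → ℝ := fun y => φ y - φ z₀ - fderiv ℝ φ z₀ (y - z₀) - 1 / 2 * A (y - z₀) (y - z₀) with hk
  have hkd : ∀ y, HasFDerivAt k (fderiv ℝ φ y - fderiv ℝ φ z₀ - A (y - z₀)) y := by
    intro y
    have hs : HasFDerivAt (fun y : E => y - z₀) (ContinuousLinearMap.id ℝ E) y :=
      (hasFDerivAt_id y).sub_const z₀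
    have a1 : HasFDerivAt φ (fderiv ℝ φ y) y := (hφ.differentiable (by norm_num) y).hasFDerivAt
    have a2 : HasFDerivAt (fun y => fderiv ℝ φ z₀ (y - z₀)) (fderiv ℝ φ z₀) y := by
      exact (fderiv ℝ φ z₀).hasFDerivAt.comp y hs
    have a3 : HasFDerivAt (fun y => A (y - z₀)) A y := by
      exact A.hasFDerivAt.comp y hs
    have a4 := a3.clm_apply hs
    have a5 := ((a1.sub_const (φ z₀)).sub a2).sub (a4.const_mul (1 / 2))
    refine a5.congr_fderiv ?_
    ext w
    simp [hsymm w y, hsymm w z₀]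
    ring
  have hm := (convex_closedBall z₀ ‖z - z₀‖).norm_image_sub_le_of_norm_hasFDerivWithin_le
    (f := k) (C := ε * ‖z - z₀‖) (fun y _ => (hkd y).hasFDerivWithinAt) (fun y hy => by
      rw [mem_closedBall_iff_norm] at hy
      refine (hball y ?_).trans (mul_le_mul_of_nonneg_left hy hε.le)
      rw [mem_ball_iff_norm] at hz ⊢
      exact hy.trans_lt hz) (Metric.mem_closedBall_self (norm_nonneg _))
    (mem_closedBall_iff_norm.2 le_rfl : z ∈ Metric.closedBall z₀ ‖z - z₀‖)
  have hk0 : k z₀ = 0 := by simp [hk]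
  rw [hk0, sub_zero, Real.norm_eq_abs] at hm
  calc _ ≤ _ := hm
    _ = _ := by ring

lemma spaceGrad_eq {φ : (Fin n → ℝ) × ℝ → ℝ} (hφ : ContDiff ℝ 2 φ) (z : (Fin n → ℝ) × ℝ)
    (y : Fin n → ℝ) : spaceGrad φ z ⬝ᵥ y = fderiv ℝ φ z (y, 0) := by
  have h1 : HasFDerivAt (fun x : Fin n → ℝ => (x, z.2)) (ContinuousLinearMap.inl ℝ (Fin n → ℝ) ℝ) z.1 :=
    hasFDerivAt_prodMk_left z.1 z.2
  have h2 : HasFDerivAt φ (fderiv ℝ φ z) (z.1, z.2) := (hφ.differentiable (by norm_num) z).hasFDerivAt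
  have h3 := (h2.comp z.1 h1).fderiv
  have h4 : ∀ i, spaceGrad φ z i = fderiv ℝ φ z (Pi.single i 1, 0) := fun i => by
    simp only [spaceGrad, gradv]
    change fderiv ℝ (φ ∘ fun x => (x, z.2)) z.1 _ = _
    rw [h3]; rfl
  have h5 : (y, (0:ℝ)) = ∑ i, y i • ((Pi.single i 1 : Fin n → ℝ), (0:ℝ)) := by
    ext j
    · simp [Prod.fst_sum, Finset.sum_apply, Pi.single_apply]
    · simp [Prod.snd_sum]
  rw [h5, map_sum]
  simp only [map_smul, smul_eq_mul, dotProduct, h4]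
  exact Finset.sum_congr rfl fun i _ => mul_comm _ _

lemma timeDeriv_eq {φ : (Fin n → ℝ) × ℝ → ℝ} (hφ : ContDiff ℝ 2 φ) (z : (Fin n → ℝ) × ℝ) (s : ℝ) :
    timeDeriv φ z * s = fderiv ℝ φ z (0, s) := by
  have h1 : HasFDerivAt (fun t : ℝ => (z.1, t)) (ContinuousLinearMap.inr ℝ (Fin n → ℝ) ℝ) z.2 :=
    hasFDerivAt_prodMk_right z.1 z.2
  have h2 : HasFDerivAt φ (fderiv ℝ φ z) (z.1, z.2) := (hφ.differentiable (by norm_num) z).hasFDerivAt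
  have h3 := (h2.comp z.2 h1).hasDerivAt.deriv
  have h4 : timeDeriv φ z = fderiv ℝ φ z (0, 1) := by
    simp only [timeDeriv]
    change deriv (φ ∘ fun t => (z.1, t)) z.2 = _
    rw [h3]; rfl
  have h5 : ((0 : Fin n → ℝ), s) = s • ((0 : Fin n → ℝ), (1:ℝ)) := by simp
  rw [h5, map_smul, h4, smul_eq_mul, mul_comm]

lemma spaceHess_apply {φ : (Fin n → ℝ) × ℝ → ℝ} (hφ : ContDiff ℝ 2 φ) (z : (Fin n → ℝ) × ℝ)
    (i j : Fin n) : spaceHess φ z i j =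
      fderiv ℝ (fderiv ℝ φ) z (Pi.single i 1, 0) (Pi.single j 1, 0) := by
  have hd : ContDiff ℝ 1 (fderiv ℝ φ) := hφ.fderiv_right (by norm_num)
  have e : (fun y => fderiv ℝ (fun x => φ (x, z.2)) y (Pi.single j 1)) =
      fun y => fderiv ℝ φ (y, z.2) (Pi.single j 1, 0) := by
    ext y
    have := spaceGrad_eq hφ (y, z.2) (Pi.single j 1)
    rw [dotProduct_single_one] at this
    exact this
  simp only [spaceHess, hessv, Matrix.of_apply]
  rw [e]
  have h1 : HasFDerivAt (fun x : Fin n → ℝ => (x, z.2)) (ContinuousLinearMap.inl ℝ (Fin n → ℝ) ℝ) z.1 :=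
    hasFDerivAt_prodMk_left z.1 z.2
  have h2 : HasFDerivAt (fderiv ℝ φ) (fderiv ℝ (fderiv ℝ φ) z) (z.1, z.2) :=
    (hd.differentiable (by norm_num) z).hasFDerivAt
  have h3 := (h2.comp z.1 h1).clm_apply
    (hasFDerivAt_const ((Pi.single j 1 : Fin n → ℝ), (0:ℝ)) z.1)
  have h4 := h3.fderiv
  simp only [Function.comp_apply] at h4
  rw [h4]
  simp

lemma spaceHess_herm {φ : (Fin n → ℝ) × ℝ → ℝ} (hφ : ContDiff ℝ 2 φ) (z : (Fin n → ℝ) × ℝ) :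
    (spaceHess φ z).IsHermitian := by
  have hs : IsSymmSndFDerivAt ℝ φ z := (hφ.contDiffAt).isSymmSndFDerivAt (by simp)
  ext i j
  rw [conjTranspose_apply, spaceHess_apply hφ, spaceHess_apply hφ]
  simpa using hs _ _

lemma spaceHess_quad {φ : (Fin n → ℝ) × ℝ → ℝ} (hφ : ContDiff ℝ 2 φ) (z : (Fin n → ℝ) × ℝ)
    (y : Fin n → ℝ) : y ⬝ᵥ spaceHess φ z *ᵥ y = fderiv ℝ (fderiv ℝ φ) z (y, 0) (y, 0) := by
  have h5 : (y, (0:ℝ)) = ∑ i, y i • ((Pi.single i 1 : Fin n → ℝ), (0:ℝ)) := by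
    ext j
    · simp [Prod.fst_sum, Finset.sum_apply, Pi.single_apply]
    · simp [Prod.snd_sum]
  rw [h5]
  simp only [map_sum, map_smul, ContinuousLinearMap.sum_apply, ContinuousLinearMap.smul_apply,
    smul_eq_mul, dotProduct, mulVec, spaceHess_apply hφ, Finset.mul_sum]
  rw [Finset.sum_comm]
  refine Finset.sum_congr rfl fun i _ => Finset.sum_congr rfl fun j _ => ?_
  ring

lemma taylor_quadr {φ : (Fin n → ℝ) × ℝ → ℝ} (hφ : ContDiff ℝ 2 φ) (z₀ : (Fin n → ℝ) × ℝ) {ε : ℝ}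
    (hε : 0 < ε) : ∃ C : ℝ, 0 ≤ C ∧ ∀ᶠ z in nhds z₀,
      |φ z - φ z₀ - quadr (timeDeriv φ z₀) 0 (spaceGrad φ z₀) (spaceHess φ z₀) (z - z₀)| ≤
        ε * ((z - z₀).1 ⬝ᵥ (z - z₀).1) + C * (z - z₀).2 ^ 2 := by
  set A := fderiv ℝ (fderiv ℝ φ) z₀ with hA
  set N : ℝ := ‖A‖ with hN
  have hN0 : 0 ≤ N := norm_nonneg A
  refine ⟨ε / 2 + N + N ^ 2 / (2 * ε), by positivity, ?_⟩
  have hs : IsSymmSndFDerivAt ℝ φ z₀ := (hφ.contDiffAt).isSymmSndFDerivAt (by simp)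
  filter_upwards [taylor2 hφ z₀ (half_pos hε)] with z hz
  have hd := dist_sq_le z z₀
  rw [dist_eq_norm] at hd
  set w := z - z₀ with hw
  obtain ⟨y, s⟩ := w
  dsimp only at hd ⊢
  have e0 : ((y, s) : (Fin n → ℝ) × ℝ) = (y, 0) + (0, s) := by simp
  have e1 : fderiv ℝ φ z₀ (y, s) = timeDeriv φ z₀ * s + spaceGrad φ z₀ ⬝ᵥ y := by
    rw [e0, map_add, spaceGrad_eq hφ, timeDeriv_eq hφ]; ring
  have e2 : A (y, s) (y, s) = y ⬝ᵥ spaceHess φ z₀ *ᵥ y + 2 * A (y, 0) (0, s) + A (0, s) (0, s) := by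
    have h3 : A (0, s) (y, 0) = A (y, 0) (0, s) := hs _ _
    rw [e0, map_add, map_add, ContinuousLinearMap.add_apply, ContinuousLinearMap.add_apply, h3,
      spaceHess_quad hφ]
    ring
  have b1 : |A (y, 0) (0, s)| ≤ N * eucNorm y * |s| := by
    refine (A.le_opNorm₂ _ _).trans ?_
    have : ‖((y, 0) : (Fin n → ℝ) × ℝ)‖ ≤ eucNorm y := by
      rw [Prod.norm_def]; simp [norm_le_eucNorm, eucNorm_nonneg]
    have h2 : ‖((0, s) : (Fin n → ℝ) × ℝ)‖ = |s| := by
      rw [Prod.norm_def]; simp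
    rw [h2]
    gcongr
  have b2 : |A (0, s) (0, s)| ≤ N * |s| * |s| := by
    refine (A.le_opNorm₂ _ _).trans ?_
    have h2 : ‖((0, s) : (Fin n → ℝ) × ℝ)‖ = |s| := by
      rw [Prod.norm_def]; simp
    rw [h2]
  rw [e1, e2] at hz
  have hy := eucNorm_sq y
  have hss := sq_abs s
  set Y := eucNorm y
  have b3 : N * Y * |s| ≤ ε / 2 * Y ^ 2 + N ^ 2 / (2 * ε) * |s| ^ 2 := by
    have : N ^ 2 / (2 * ε) * |s| ^ 2 = ε / 2 * (N * |s| / ε) ^ 2 := by field_simp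
    rw [this]
    have e : N * Y * |s| = ε * (Y * (N * |s| / ε)) := by field_simp
    rw [e]
    nlinarith [sq_nonneg (Y - N * |s| / ε)]
  simp only [quadr]
  rw [abs_le] at hz b1 b2 ⊢
  have hQ : ε / 2 * ‖((y, s) : (Fin n → ℝ) × ℝ)‖ ^ 2 ≤ ε / 2 * (y ⬝ᵥ y + s ^ 2) :=
    mul_le_mul_of_nonneg_left hd (by positivity)
  rw [← hy] at hQ ⊢
  rw [← hss] at hQ ⊢
  have b4 : N * |s| * |s| = N * |s| ^ 2 := by ring
  rw [b4] at b2
  have h6 : 0 ≤ N * |s| ^ 2 := by positivity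
  constructor <;> nlinarith
end taylor

section final
variable {K : Set (Fin n → ℝ)} {f : (Fin n → ℝ) → ℝ} {g : (Fin n → ℝ) → ℝ} {c B : ℝ}

/-- touching from below. -/
def TouchB (u : (Fin n → ℝ) × ℝ → ℝ) (z₀ : (Fin n → ℝ) × ℝ) (τ : ℝ) (p : Fin n → ℝ)
    (M : Matrix (Fin n) (Fin n) ℝ) : Prop :=
  ∀ ε : ℝ, 0 < ε → ∃ C : ℝ, 0 ≤ C ∧ ∀ᶠ z in nhds z₀,
    quadr τ 0 p M (z - z₀) - (ε * ((z - z₀).1 ⬝ᵥ (z - z₀).1) + C * (z - z₀).2 ^ 2) ≤ u z - u z₀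

lemma bump (hK : GoodCone K) (hf : GoodF K f) (hg : GData g c B) {z₀ : (Fin n → ℝ) × ℝ}
    (hz₀ : 0 < z₀.2) {τ : ℝ} {p : Fin n → ℝ} {M : Matrix (Fin n) (Fin n) ℝ} (hM : M.IsHermitian)
    {η : Fin n → ℝ} (hη : HH p η) (hηK : eigIn K (conjM (gammaE η) M))
    (h : ∀ η, HH p η → τ < Fof f (conjM (gammaE η) M))
    (ht : TouchB (perr K f g c B) z₀ τ p M) (hob : perr K f g c B z₀ < obst c B z₀) : False := by
  obtain ⟨δ, hδ, hQ⟩ := QQ.of_open hK hf hM hη hηK h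
  obtain ⟨C, hC, htC⟩ := ht (δ / 4) (by linarith)
  have hu := perr_InS hK hf hg
  set u := perr K f g c B with hudef
  set N := M + (-δ) • (1 : Matrix (Fin n) (Fin n) ℝ) with hN
  have hNH : N.IsHermitian := herm_add_smul hM (-δ)
  set P := quadr τ (-(C + 1)) p N with hP
  have hPc : Continuous P := quadr_continuous _ _ _ _
  have hP0 : P 0 = 0 := quadr_zero _ _ _ _
  have hPe : ∀ w, P w = quadr τ 0 p M w - (δ / 2 * (w.1 ⬝ᵥ w.1) + (C + 1) * w.2 ^ 2) := fun w => by
    simp only [hP, hN, quadr, quad_add_smul]; ring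
  obtain ⟨θ, hθ⟩ : ∃ θ, θ = (obst c B z₀ - u z₀) / 2 := ⟨_, rfl⟩
  have hθ0 : 0 < θ := by rw [hθ]; linarith
  obtain ⟨κ, hκ⟩ : ∃ κ, κ = min (δ / 4) 1 := ⟨_, rfl⟩
  have hκ0 : 0 < κ := by rw [hκ]; positivity
  have hκ1 : κ ≤ δ / 4 := by rw [hκ]; exact min_le_left _ _
  have hκ2 : κ ≤ 1 := by rw [hκ]; exact min_le_right _ _
  have ev1 : ∀ᶠ z in nhds z₀, u z₀ + P (z - z₀) + κ * dist z z₀ ^ 2 ≤ u z := by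
    filter_upwards [htC] with z hz
    have h1 := dist_sq_le z z₀
    have h2 := mul_le_mul_of_nonneg_left h1 hκ0.le
    rw [hPe]
    have h3 := dot_nonneg (z - z₀).1
    have h4 := sq_nonneg (z - z₀).2
    nlinarith
  have ev2 : ∀ᶠ z : (Fin n → ℝ) × ℝ in nhds z₀, 0 < z.2 :=
    (continuous_snd.tendsto z₀).eventually_const_lt hz₀
  have ev3 : ∀ᶠ z in nhds z₀, u z₀ + P (z - z₀) + θ < obst c B z := by
    have hc : Continuous fun z => u z₀ + P (z - z₀) + θ := by fun_prop
    have h1 := hc.tendsto z₀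
    refine h1.eventually_lt ((obst_cont c B).tendsto z₀) ?_
    simp only [sub_self, hP0]
    linarith
  have ev4 : ∀ᶠ z : (Fin n → ℝ) × ℝ in nhds z₀, |(τ + 2 * (-(C + 1)) * (z - z₀).2) - τ| < δ := by
    have hc : Continuous fun z : (Fin n → ℝ) × ℝ => |(τ + 2 * (-(C + 1)) * (z - z₀).2) - τ| := by
      fun_prop
    refine (hc.tendsto z₀).eventually_lt_const ?_
    simpa using hδ
  have ev5 : ∀ᶠ z : (Fin n → ℝ) × ℝ in nhds z₀, dist (p + N *ᵥ (z - z₀).1) p < δ := by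
    have hc : Continuous fun z : (Fin n → ℝ) × ℝ => dist (p + N *ᵥ (z - z₀).1) p := by
      unfold mulVec dotProduct
      fun_prop
    refine (hc.tendsto z₀).eventually_lt_const ?_
    simpa using hδ
  obtain ⟨r, hr, hball⟩ := Metric.eventually_nhds_iff_ball.1
    (ev1.and (ev2.and (ev3.and (ev4.and ev5))))
  obtain ⟨κ', hκ'⟩ : ∃ κ', κ' = min θ (κ * r ^ 2 / 8) := ⟨_, rfl⟩
  have hκ'0 : 0 < κ' := by rw [hκ']; positivity
  have hκ'1 : κ' ≤ θ := by rw [hκ']; exact min_le_left _ _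
  have hκ'2 : κ' ≤ κ * r ^ 2 / 8 := by rw [hκ']; exact min_le_right _ _
  set q : (Fin n → ℝ) × ℝ → ℝ := fun z => u z₀ + P (z - z₀) + κ' with hq
  have hqc : Continuous q := by rw [hq]; fun_prop
  have hqu : ∀ z ∈ Metric.ball z₀ r, r / 2 < dist z z₀ → q z ≤ u z := by
    intro z hz hz2
    have h1 := (hball z hz).1
    have h2 : (r / 2) ^ 2 ≤ dist z z₀ ^ 2 := pow_le_pow_left₀ (by positivity) hz2.le 2
    have h3 := mul_le_mul_of_nonneg_left h2 hκ0.le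
    have h4 : 0 < κ * r ^ 2 := by positivity
    simp only [hq]
    nlinarith
  set w : (Fin n → ℝ) × ℝ → ℝ := fun z => if z ∈ Metric.ball z₀ r then max (u z) (q z) else u z with hw
  have hwin : ∀ z ∈ Metric.ball z₀ r, w =ᶠ[nhds z] fun z => max (u z) (q z) := by
    intro z hz
    filter_upwards [Metric.isOpen_ball.mem_nhds hz] with y hy
    simp only [hw, if_pos hy]
  have hwout : ∀ z, r / 2 < dist z z₀ → w =ᶠ[nhds z] u := by
    intro z hz
    have hc : Continuous fun z => dist z z₀ := by fun_prop
    filter_upwards [(hc.tendsto z).eventually_const_lt hz] with y hy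
    simp only [hw]
    split_ifs with h1
    · exact max_eq_left (hqu y h1 hy)
    · rfl
  have hcases : ∀ z, z ∈ Metric.ball z₀ r ∨ r / 2 < dist z z₀ := fun z => by
    rcases lt_or_ge (dist z z₀) r with h | h
    · exact Or.inl h
    · exact Or.inr (by linarith)
  have hwS : InS K f g c B w := by
    refine ⟨?_, ?_, ?_, ?_⟩
    · rw [continuous_iff_continuousAt]
      intro z
      rcases hcases z with h | h
      · exact ((hu.cont.max hqc).continuousAt).congr (hwin z h).symm
      · exact (hu.cont.continuousAt).congr (hwout z h).symm
    · intro z hz τ' C' p' M' hM' htw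
      rcases hcases z with h | h
      · have hwz : w z = max (u z) (q z) := (hwin z h).eq_of_nhds
        rcases le_or_gt (q z) (u z) with h1 | h1
        · refine hu.sub z hz τ' C' p' M' hM' (htw.of_le ?_)
          filter_upwards [hwin z h] with y hy
          rw [hy, hwz, max_eq_left h1]
          linarith [le_max_left (u y) (q y)]
        · obtain ⟨_, _, _, h4, h5⟩ := hball z h
          have hcmp : ∀ᶠ y in nhds z, quadr (τ + 2 * (-(C + 1)) * (z - z₀).2) (-(C + 1))
              (p + N *ᵥ (z - z₀).1) N (y - z) ≤ quadr τ' C' p' M' (y - z) := by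
            filter_upwards [hwin z h, htw] with y hy hy2
            refine le_trans ?_ hy2
            rw [hy, hwz, max_eq_right h1.le, ← quadr_recenter _ _ _ hNH]
            have e : z - z₀ + (y - z) = y - z₀ := by abel
            rw [e]
            have := le_max_right (u y) (q y)
            simp only [hq, hP] at this ⊢
            linarith
          obtain ⟨e1, e2, e3⟩ := quadr_compare hcmp
          have := hQ _ _ h4 h5
          rw [e1, e2] at this
          exact this.mono hK hf hM' e3
      · refine hu.sub z hz τ' C' p' M' hM' (htw.of_le ?_)
        have e := (hwout z h).eq_of_nhds
        filter_upwards [hwout z h] with y hy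
        rw [hy, e]
    · intro x t ht
      have : (x, t) ∉ Metric.ball z₀ r := fun hx => by
        have := (hball _ hx).2.1
        exact absurd ht (not_le.2 this)
      simp only [hw, if_neg this]
      exact hu.neg x t ht
    · intro x t ht
      simp only [hw]
      split_ifs with h1
      · refine max_le (hu.pos x t ht) ?_
        have := (hball _ h1).2.2.1
        simp only [hq]
        linarith
      · exact hu.pos x t ht
  have h1 := le_perr hwS z₀
  have h2 : w z₀ = max (u z₀) (q z₀) := (hwin z₀ (Metric.mem_ball_self hr)).eq_of_nhds
  have h3 : q z₀ = u z₀ + κ' := by simp only [hq, sub_self, hP0, add_zero]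
  have h4 := le_max_right (u z₀) (q z₀)
  rw [← hudef] at h1
  linarith

lemma eucNorm_mono_line {x e : Fin n → ℝ} (h : 0 ≤ x ⬝ᵥ e) {r : ℝ} (hr : 0 ≤ r) :
    eucNorm x ≤ eucNorm (x + r • e) := by
  refine (pow_le_pow_iff_left₀ (eucNorm_nonneg _) (eucNorm_nonneg _) two_ne_zero).1 ?_
  rw [eucNorm_sq, eucNorm_sq]
  simp only [add_dotProduct, dotProduct_add, smul_dotProduct, dotProduct_smul, smul_eq_mul,
    dotProduct_comm e x]
  have h1 := mul_nonneg hr h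
  have h2 := mul_nonneg hr (mul_nonneg hr (dot_nonneg e))
  nlinarith

lemma touch_obst (hK : GoodCone K) (hf : GoodF K f) {z₀ : (Fin n → ℝ) × ℝ}
    {u : (Fin n → ℝ) × ℝ → ℝ} (hu : ∀ᶠ z in nhds z₀, u z ≤ obst c B z)
    {τ : ℝ} {p : Fin n → ℝ} {M : Matrix (Fin n) (Fin n) ℝ}
    {η : Fin n → ℝ} (hη : HH p η) (hηK : eigIn K (conjM (gammaE η) M))
    (ht : TouchB u z₀ τ p M) (hob : u z₀ = obst c B z₀) : False := by
  have key0 : ∀ e : Fin n → ℝ, 0 ≤ z₀.1 ⬝ᵥ e → p ⬝ᵥ e = 0 → e ⬝ᵥ M *ᵥ e ≤ 0 := by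
    intro e he hpe
    have : ∀ ε : ℝ, 0 < ε → e ⬝ᵥ M *ᵥ e ≤ 2 * ε * (e ⬝ᵥ e) := by
      intro ε hε
      obtain ⟨C, hC, hev⟩ := ht ε hε
      have h1 := eventually_line (hev.and hu) (e, 0)
      have h2 : ∀ᶠ r : ℝ in nhdsWithin 0 (Ioi 0),
          0 ≤ 0 * r + (ε * (e ⬝ᵥ e) - 1 / 2 * (e ⬝ᵥ M *ᵥ e)) * r ^ 2 + 0 * r ^ 3 := by
        filter_upwards [h1, self_mem_nhdsWithin] with r hr (hr0 : 0 < r)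
        obtain ⟨hr1, hr2⟩ := hr
        simp only [add_sub_cancel_left, Prod.smul_mk, smul_zero, quadr_space, smul_dotProduct,
          dotProduct_smul, smul_eq_mul, mul_zero, hpe] at hr1
        have h3 : obst c B (z₀ + r • (e, 0)) ≤ obst c B z₀ := by
          simp only [obst, Prod.fst_add, Prod.snd_add, Prod.smul_mk, smul_zero, add_zero]
          have := eucNorm_mono_line he hr0.le
          gcongr
        have h4 := hr2.trans h3
        rw [← hob] at h4
        simp only [Prod.smul_mk, smul_zero] at h4
        linear_combination hr1 + h4
      have := (one_dim h2).2 rfl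
      linarith
    have hq := dot_nonneg e
    refine le_of_forall_pos_le_add fun ε hε => ?_
    have h1 := this (ε / (2 * (e ⬝ᵥ e + 1))) (by positivity)
    have h2 : 2 * (ε / (2 * (e ⬝ᵥ e + 1))) * (e ⬝ᵥ e) = ε * ((e ⬝ᵥ e) / (e ⬝ᵥ e + 1)) := by
      field_simp
    have h3 : (e ⬝ᵥ e) / (e ⬝ᵥ e + 1) ≤ 1 := by rw [div_le_one (by linarith)]; linarith
    rw [h2] at h1
    nlinarith
  have key : ∀ e : Fin n → ℝ, p ⬝ᵥ e = 0 → e ⬝ᵥ M *ᵥ e ≤ 0 := by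
    intro e hpe
    rcases le_total 0 (z₀.1 ⬝ᵥ e) with h | h
    · exact key0 e h hpe
    · have := key0 (-e) (by rw [dotProduct_neg]; linarith) (by rw [dotProduct_neg, hpe, neg_zero])
      simpa [mulVec_neg] using this
  refine not_eigIn_of_nonpos hK hf (fun x => ?_) hηK
  rw [quad_conj]
  apply key
  by_cases hp0 : p = 0
  · rw [hp0, zero_dotProduct]
  have hpn := eucNorm_pos hp0
  have hη1 : η ⬝ᵥ η = 1 := by
    have h1 := eucNorm_sq p
    have h2 : p ⬝ᵥ p = eucNorm p * (eucNorm p * (η ⬝ᵥ η)) := by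
      conv_lhs => rw [← hη.2]
      rw [smul_dotProduct, dotProduct_smul]; rfl
    rw [h2] at h1
    have : eucNorm p ^ 2 * (η ⬝ᵥ η - 1) = 0 := by linarith
    rcases mul_eq_zero.1 this with h | h
    · exact absurd h (by positivity)
    · linarith
  have h4 : η ⬝ᵥ (gammaE η *ᵥ x) = 0 := by
    rw [gammaE_mulVec, dotProduct_sub, dotProduct_smul, hη1]; simp
  have h5 := congrArg (· ⬝ᵥ (gammaE η *ᵥ x)) hη.2
  simp only [smul_dotProduct, h4, smul_zero] at h5
  exact h5.symm

lemma perr_weakSub (hn : 2 ≤ n) (hK : GoodCone K) (hf : GoodF K f) (hg : GData g c B)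
    {D : Set ((Fin n → ℝ) × ℝ)} (hD : D ⊆ {z | 0 < z.2}) {φ} (hφ : Admissible K f φ D)
    {z₀} (hz₀ : z₀ ∈ D) (hmax : IsLocalMax (fun z => perr K f g c B z - φ z) z₀) :
      (spaceGrad φ z₀ ≠ 0 →
        timeDeriv φ z₀ ≤ Fof f (conjM (gammaP (spaceGrad φ z₀)) (spaceHess φ z₀))) ∧
      (spaceGrad φ z₀ = 0 →
        ∃ η : Fin n → ℝ, eucNorm η ≤ 1 ∧
          timeDeriv φ z₀ ≤ Fof f (conjM (gammaE η) (spaceHess φ z₀))) := by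
  have hφ2 : ContDiff ℝ 2 φ := hφ.1.of_le (by norm_cast)
  have hM := spaceHess_herm hφ2 z₀
  have ha := hφ.2 z₀ hz₀
  refine QQ.conclude (by omega) hK hf hM ?_ (fun h => (ha.1 h).1)
    (fun h => by obtain ⟨η, h1, h2, _⟩ := ha.2 h; exact ⟨η, h1, h2⟩)
  refine QQ.of_forall_add hK hf hM fun ε hε => ?_
  obtain ⟨C, hC, hev⟩ := taylor_quadr hφ2 z₀ hε
  refine (perr_InS hK hf hg).sub z₀ (hD hz₀) _ (0 + C) _ _ (herm_add_smul hM _) ?_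
  filter_upwards [hev, hmax] with z h1 h2
  rw [quadr_add]
  have := (abs_le.1 h1).2
  linarith

lemma perr_weakSuper (hK : GoodCone K) (hf : GoodF K f) (hg : GData g c B)
    {D : Set ((Fin n → ℝ) × ℝ)} (hD : D ⊆ {z | 0 < z.2}) {φ} (hφ : Admissible K f φ D)
    {z₀} (hz₀ : z₀ ∈ D) (hmin : IsLocalMin (fun z => perr K f g c B z - φ z) z₀) :
      (spaceGrad φ z₀ ≠ 0 →
        Fof f (conjM (gammaP (spaceGrad φ z₀)) (spaceHess φ z₀)) ≤ timeDeriv φ z₀) ∧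
      (spaceGrad φ z₀ = 0 →
        ∃ η : Fin n → ℝ, eucNorm η ≤ 1 ∧
          Fof f (conjM (gammaE η) (spaceHess φ z₀)) ≤ timeDeriv φ z₀) := by
  have hφ2 : ContDiff ℝ 2 φ := hφ.1.of_le (by norm_cast)
  have hM := spaceHess_herm hφ2 z₀
  have ha := hφ.2 z₀ hz₀
  have hz : 0 < z₀.2 := hD hz₀
  have htB : TouchB (perr K f g c B) z₀ (timeDeriv φ z₀) (spaceGrad φ z₀) (spaceHess φ z₀) := by
    intro ε hε
    obtain ⟨C, hC, hev⟩ := taylor_quadr hφ2 z₀ hε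
    refine ⟨C, hC, ?_⟩
    filter_upwards [hev, hmin] with z h1 h2
    have := (abs_le.1 h1).1
    linarith
  have hu := perr_InS hK hf hg
  have main : ∀ η, HH (spaceGrad φ z₀) η → eigIn K (conjM (gammaE η) (spaceHess φ z₀)) →
      ¬ ∀ η, HH (spaceGrad φ z₀) η → timeDeriv φ z₀ < Fof f (conjM (gammaE η) (spaceHess φ z₀)) := by
    intro η hη hηK hall
    rcases (hu.pos z₀.1 z₀.2 hz.le).lt_or_eq with h | h
    · exact bump hK hf hg hz hM hη hηK hall htB h
    · refine touch_obst (c := c) (B := B) hK hf ?_ hη hηK htB h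
      have ev2 : ∀ᶠ z : (Fin n → ℝ) × ℝ in nhds z₀, 0 < z.2 :=
        (continuous_snd.tendsto z₀).eventually_const_lt hz
      filter_upwards [ev2] with z hz
      exact hu.pos z.1 z.2 hz.le
  constructor
  · intro hp
    by_contra hc
    push Not at hc
    obtain ⟨η, hη⟩ := HH_exists (spaceGrad φ z₀)
    refine main η hη (by rw [← HH_eq hp hη]; exact (ha.1 hp).1) fun η' hη' => ?_
    rw [← HH_eq hp hη']; exact hc
  · intro hp
    by_contra hc
    push Not at hc
    obtain ⟨η, h1, h2, _⟩ := ha.2 hp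
    refine main η (by rw [hp]; exact HH_zero.2 h1) h2 fun η' hη' => hc η' ?_
    rw [hp] at hη'
    exact HH_zero.1 hη'

end final

theorem stmt5 {n : ℕ} (hn : 2 ≤ n) (K : Set (Fin n → ℝ)) (f : (Fin n → ℝ) → ℝ)
    (hK : GoodCone K) (hf : GoodF K f)
    (g : (Fin n → ℝ) → ℝ) (hg : Continuous g)
    (S c : ℝ) (hS : 0 < S) (hgc : ∀ x : Fin n → ℝ, S ≤ eucNorm x → g x = c) :
    ∃ u : (Fin n → ℝ) × ℝ → ℝ, WeakSol K f u ∧ (∀ x : Fin n → ℝ, u (x, 0) = g x) ∧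
      ∃ R c' : ℝ, 0 < R ∧ ∀ z ∈ HalfSpace n, R ≤ eucNorm z.1 + z.2 → u z = c' := by
  obtain ⟨B, hG⟩ := exists_GData hg hS hgc
  have hB := hG.hB
  have : Nonempty (Fin n) := ⟨⟨0, by omega⟩⟩
  obtain ⟨a, ha, ha1, ha2⟩ : ∃ a : ℝ, 0 < a ∧ a ≤ 1 ∧ ∀ i, a ≤ f ((fun _ => 1) - Pi.single i 1) := by
    obtain ⟨m, hm⟩ := Finite.exists_min fun i : Fin n => f ((fun _ => 1) - Pi.single i 1)
    exact ⟨min (f ((fun _ => 1) - Pi.single m 1)) 1,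
      lt_min (hf.2.2.2.2.1 _ (hK.sub_single_mem m)) one_pos, min_le_right _ _,
      fun i => (min_le_left _ _).trans (hm i)⟩
  have hlow := InS_lowb hn hK hf hG hgc ha ha1 ha2
  have hu := perr_InS hK hf hG
  set u := perr K f g c B with hudef
  have hbd : ∃ M : ℝ, ∀ z ∈ HalfSpace n, |u z| ≤ M := by
    refine ⟨|c| + B + (B + 1) * (S ^ 2 + 1) ^ 2, fun z hz => ?_⟩
    have hz : 0 ≤ z.2 := hz
    have h1 := (hu.pos z.1 z.2 hz).trans (obst_le hB hz)
    have h2 := le_perr hlow z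
    rw [← hudef] at h2
    simp only [lowb] at h2
    have h3 : max (S ^ 2 + 1 - z.1 ⬝ᵥ z.1 - 2 * a * z.2) 0 ≤ S ^ 2 + 1 := by
      apply max_le _ (by positivity)
      have := dot_nonneg z.1
      have := mul_nonneg ha.le hz
      linarith
    have h4 := pow_le_pow_left₀ (le_max_right _ _) h3 2
    have h5 := mul_le_mul_of_nonneg_left h4 (by linarith : 0 ≤ B + 1)
    have h6 := le_abs_self c
    have h7 := neg_abs_le c
    have h8 : 0 ≤ (B + 1) * (S ^ 2 + 1) ^ 2 := by positivity
    have h9 : u z ≤ c + B := h1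
    rw [abs_le]; constructor <;> linarith
  refine ⟨u, ⟨⟨hu.cont.continuousOn, hbd, ?_⟩, ⟨hu.cont.continuousOn, hbd, ?_⟩⟩, ?_, ?_⟩
  · intro D _ hD φ hφ z₀ hz₀ hmax
    exact perr_weakSub hn hK hf hG hD hφ hz₀ hmax
  · intro D _ hD φ hφ z₀ hz₀ hmin
    exact perr_weakSuper hK hf hG hD hφ hz₀ hmin
  · intro x
    have := perr_neg (K := K) (f := f) hG (x := x) (le_refl 0)
    rw [sub_zero] at this
    exact this
  · refine ⟨B + (S ^ 2 + 1) + (S ^ 2 + 1) / (2 * a), c, by positivity, fun z hz hR => ?_⟩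
    have hz : 0 ≤ z.2 := hz
    have hd : 0 < (S ^ 2 + 1) / (2 * a) := by positivity
    have hS2 : 0 < S ^ 2 + 1 := by positivity
    apply le_antisymm
    · refine (hu.pos z.1 z.2 hz).trans ?_
      simp only [obst]
      rw [max_eq_left (by linarith), add_zero]
    · refine le_trans ?_ (le_perr hlow z)
      simp only [lowb]
      have hz1 := dot_nonneg z.1
      have h1 : S ^ 2 + 1 - z.1 ⬝ᵥ z.1 - 2 * a * z.2 ≤ 0 := by
        rcases le_total (S ^ 2 + 1) (eucNorm z.1) with h | h
        · have h2 : S ^ 2 + 1 ≤ z.1 ⬝ᵥ z.1 := by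
            rw [← eucNorm_sq]
            nlinarith
          have := mul_nonneg ha.le hz
          linarith
        · have h2 : (S ^ 2 + 1) / (2 * a) ≤ z.2 := by linarith
          rw [div_le_iff₀ (by linarith)] at h2
          linarith
      rw [max_eq_right h1]
      simp
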